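/- Let n ≥ 5 and 1 ≤ q < ∞, and set p = nq. There exists a constant C = C(n,q) such that for all f₁,…,f_n ∈ ℓ^p(ℤ), ‖A_*[f₁,…,f_n]‖_{ℓ^q(ℤ)}^q ≤ C ∏_{i=1}^n ( Σ_{y ∈ ℤ} ( sup_{N ≥ 1} N^{−1} Σ_{x ∈ [−N,N] ∩ ℤ} |f_i(y − x)|² )^{qn/2} )^{1/n}, where the supremum is over integers N ≥ 1. -/

import Mathlib

open scoped BigOperators ENNReal NNReal
open MeasureTheory Finset

noncomputable section

/-- `sphereCount n lam` is the number of lattice points `x ∈ ℤ^n` with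
`x₁² + ⋯ + x_n² = lam`. -/
def sphereCount (n lam : ℕ) : ℕ :=
  {x : Fin n → ℤ | ∑ i, (x i) ^ 2 = (lam : ℤ)}.ncard

/-- The multilinear spherical average
`A_lam[f₁,…,f_n](y) = (1/r_n(lam)) ∑_{|x|² = lam} f₁(y-x₁)⋯f_n(y-x_n)`. -/
def mulAvg (n lam : ℕ) (f : Fin n → ℤ → ℂ) (y : ℤ) : ℂ :=
  (sphereCount n lam : ℂ)⁻¹ *
    ∑ᶠ x ∈ {x : Fin n → ℤ | ∑ i, (x i) ^ 2 = (lam : ℤ)}, ∏ i, f i (y - x i)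

/-- The maximal function `A_*[f₁,…,f_n](y) = sup_{lam ≥ 1} |A_lam[f₁,…,f_n](y)|`. -/
def maxFn (n : ℕ) (f : Fin n → ℤ → ℂ) (y : ℤ) : ℝ≥0∞ :=
  ⨆ (lam : ℕ) (_ : 1 ≤ lam), (‖mulAvg n lam f y‖₊ : ℝ≥0∞)

/-- The `ℓ^p(ℤ)` norm of a complex-valued function, valued in `ℝ≥0∞`. -/
def lpNorm (p : ℝ) (g : ℤ → ℂ) : ℝ≥0∞ :=
  (∑' x : ℤ, (‖g x‖₊ : ℝ≥0∞) ^ p) ^ (1 / p)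

/-- The `ℓ^q(ℤ)` norm of an `ℝ≥0∞`-valued function. -/
def lqNormE (q : ℝ) (g : ℤ → ℝ≥0∞) : ℝ≥0∞ :=
  (∑' x : ℤ, g x ^ q) ^ (1 / q)

/-! ### Part 1: theta function bound -/

/-- the three thetanulls -/
def th2 (τ : ℂ) : ℂ := Complex.exp (Real.pi * Complex.I * τ / 4) * jacobiTheta₂ (τ / 2) τ
def th3 (τ : ℂ) : ℂ := jacobiTheta₂ 0 τ
def th4 (τ : ℂ) : ℂ := jacobiTheta₂ (1 / 2) τ
def thM (τ : ℂ) : ℝ := max (max ‖th3 τ‖ ‖th4 τ‖) ‖th2 τ‖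

lemma theta_add_one (z τ : ℂ) : jacobiTheta₂ z (τ + 1) = jacobiTheta₂ (z + 1 / 2) τ := by
  refine tsum_congr (fun n ↦ ?_)
  simp_rw [jacobiTheta₂_term]
  obtain ⟨k, hk⟩ : ∃ k : ℤ, n ^ 2 = n + 2 * k := by
    obtain ⟨k, hk⟩ := Int.even_mul_succ_self (n - 1)
    exact ⟨k, by ring_nf at hk ⊢; linarith⟩
  have hk' : (n : ℂ) ^ 2 = n + 2 * k := by exact_mod_cast hk
  have : 2 * (Real.pi : ℂ) * Complex.I * n * z + Real.pi * Complex.I * n ^ 2 * (τ + 1)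
    = (2 * Real.pi * Complex.I * n * (z + 1 / 2) + Real.pi * Complex.I * n ^ 2 * τ)
      + k * (2 * Real.pi * Complex.I) := by
    have : Real.pi * Complex.I * (n:ℂ) ^ 2 * (τ + 1) = Real.pi * Complex.I * n ^ 2 * τ +
      Real.pi * Complex.I * (n:ℂ) ^ 2 := by ring
    rw [this]
    conv_lhs => rw [show Real.pi * Complex.I * (n:ℂ) ^ 2 * τ + Real.pi * Complex.I * (n:ℂ) ^ 2
      = Real.pi * Complex.I * (n:ℂ) ^ 2 * τ + Real.pi * Complex.I * (n + 2 * k) by rw [← hk']]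
    ring
  rw [this, Complex.exp_add, Complex.exp_int_mul_two_pi_mul_I, mul_one]

lemma thM_T (τ : ℂ) : thM (τ + 1) = thM τ := by
  have h3 : th3 (τ + 1) = th4 τ := by
    simp [th3, th4, theta_add_one]
  have h4 : th4 (τ + 1) = th3 τ := by
    simp only [th3, th4, theta_add_one]
    norm_num
    simpa using jacobiTheta₂_add_left 0 τ
  have h2 : ‖th2 (τ + 1)‖ = ‖th2 τ‖ := by
    simp only [th2, theta_add_one]
    rw [show (τ + 1) / 2 + 1 / 2 = τ / 2 + 1 by ring, jacobiTheta₂_add_left,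
      show Real.pi * Complex.I * (τ + 1) / 4 = Real.pi * Complex.I * τ / 4 +
        ((Real.pi / 4 : ℝ) : ℂ) * Complex.I by push_cast; ring, Complex.exp_add, norm_mul, norm_mul,
      Complex.norm_exp_ofReal_mul_I, mul_one, norm_mul]
  simp only [thM, h3, h4, h2, max_comm ‖th4 τ‖ ‖th3 τ‖]

lemma thM_S (τ : ℂ) (hτ : 0 < τ.im) : thM (-1 / τ) = ‖τ‖ ^ (1 / 2 : ℝ) * thM τ := by
  have h0 : τ ≠ 0 := by rintro rfl; simp at hτ
  have hn : ‖(-Complex.I * τ) ^ (1 / 2 : ℂ)‖ = ‖τ‖ ^ (1 / 2 : ℝ) := by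
    have := Complex.norm_cpow_real (-Complex.I * τ) (1 / 2)
    push_cast at this
    rw [this]; simp
  have hA : (-Complex.I * τ) ^ (1 / 2 : ℂ) ≠ 0 := by
    rw [Ne, Complex.cpow_eq_zero_iff]; simp [h0]
  have e3 : th3 (-1 / τ) = (-Complex.I * τ) ^ (1 / 2 : ℂ) * th3 τ := by
    have := jacobiTheta₂_functional_equation 0 τ
    simp only [th3, this]
    field_simp
    simp
  have e2 : th2 (-1 / τ) = (-Complex.I * τ) ^ (1 / 2 : ℂ) * th4 τ := by
    have := jacobiTheta₂_functional_equation (1 / 2) τ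
    simp only [th4, th2, this]
    rw [show (-1 / τ) / 2 = - (1 / 2 / τ) by ring, jacobiTheta₂_neg_left,
      show Real.pi * Complex.I * (-1 / τ) / 4 = -Real.pi * Complex.I * (1 / 2) ^ 2 / τ by ring]
    field_simp
  have e4 : th4 (-1 / τ) = (-Complex.I * τ) ^ (1 / 2 : ℂ) * th2 τ := by
    have := jacobiTheta₂_functional_equation (τ / 2) τ
    simp only [th4, th2, this]
    rw [show τ / 2 / τ = 1 / 2 by field_simp,
      show Real.pi * Complex.I * τ / 4 = -(-Real.pi * Complex.I * (τ / 2) ^ 2 / τ) by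
        field_simp; ring, Complex.exp_neg]
    field_simp [Complex.exp_ne_zero]
  simp only [thM, e2, e3, e4, norm_mul, hn]
  rw [mul_max_of_nonneg _ _ (by positivity), mul_max_of_nonneg _ _ (by positivity), max_assoc,
    max_comm (_ * ‖th2 τ‖), ← max_assoc]

def thF (τ : UpperHalfPlane) : ℝ := thM τ ^ 4 * τ.im

lemma thF_S (τ : UpperHalfPlane) : thF (ModularGroup.S • τ) = thF τ := by
  have h0 : (τ : ℂ) ≠ 0 := τ.ne_zero
  have hpos : 0 < ‖(τ : ℂ)‖ := norm_pos_iff.2 h0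
  have h1 : ((ModularGroup.S • τ : UpperHalfPlane) : ℂ) = -1 / τ := by
    rw [UpperHalfPlane.modular_S_smul]
    simp [neg_div, inv_neg]
  have h2 : (ModularGroup.S • τ).im = τ.im / ‖(τ : ℂ)‖ ^ 2 := by
    rw [ModularGroup.im_smul_eq_div_normSq, ModularGroup.denom_S, Complex.normSq_eq_norm_sq]
  unfold thF
  rw [h1, h2, thM_S _ τ.im_pos, mul_pow, ← Real.rpow_natCast (‖(τ : ℂ)‖ ^ (1 / 2 : ℝ)),
    ← Real.rpow_mul hpos.le]
  norm_num
  field_simp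

lemma thF_T (τ : UpperHalfPlane) : thF (ModularGroup.T • τ) = thF τ := by
  unfold thF
  rw [UpperHalfPlane.modular_T_smul, UpperHalfPlane.coe_vadd, UpperHalfPlane.vadd_im, add_comm]
  push_cast
  rw [thM_T]

lemma thF_smul (g : Matrix.SpecialLinearGroup (Fin 2) ℤ) :
    ∀ τ : UpperHalfPlane, thF (g • τ) = thF τ := by
  have hg : g ∈ Subgroup.closure {ModularGroup.S, ModularGroup.T} := by
    simp [SpecialLinearGroup.SL2Z_generators]
  induction hg using Subgroup.closure_induction with
  | mem x hx =>
    intro τ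
    rcases hx with rfl | rfl
    · exact thF_S τ
    · exact thF_T τ
  | one => intro τ; simp
  | mul x y _ _ hx hy => intro τ; rw [mul_smul, hx, hy]
  | inv x _ hx => intro τ; rw [← hx (x⁻¹ • τ), smul_inv_smul]

lemma thM_bound : ∃ B : ℝ, 0 < B ∧ ∀ τ : ℂ, 1 / 2 ≤ τ.im → thM τ ≤ B := by
  have hs := summable_pow_mul_jacobiTheta₂_term_bound (1 / 4) (T := 1 / 2) (by norm_num) 0
  simp only [pow_zero, one_mul] at hs
  set u : ℤ → ℝ := fun n ↦ Real.exp (-Real.pi * (1 / 2 * n ^ 2 - 2 * (1 / 4) * |n|)) with hu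
  have hs' : Summable u := by simpa using hs
  refine ⟨∑' n, u n, ?_, ?_⟩
  · exact hs'.tsum_pos (fun n ↦ (Real.exp_pos _).le) 0 (Real.exp_pos _)
  intro τ hτ
  have key : ∀ z : ℂ, z.im = 0 → ‖jacobiTheta₂ z τ‖ ≤ ∑' n, u n := by
    intro z hz
    refine tsum_of_norm_bounded hs'.hasSum (fun n ↦ ?_)
    have := norm_jacobiTheta₂_term_le (S := 1 / 4) (T := 1 / 2) (by norm_num) (z := z) (τ := τ)
      (by rw [hz]; norm_num) hτ n
    simpa [hu] using this
  refine max_le (max_le (key _ (by simp)) (key _ (by simp))) ?_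
  unfold th2 jacobiTheta₂
  rw [← tsum_mul_left]
  refine tsum_of_norm_bounded hs'.hasSum (fun n ↦ ?_)
  rw [norm_mul, norm_jacobiTheta₂_term, Complex.norm_exp, ← Real.exp_add]
  simp only [hu]
  apply Real.exp_le_exp.2
  have e1 : (Real.pi * Complex.I * τ / 4).re = - Real.pi * τ.im / 4 := by
    rw [show (Real.pi * Complex.I * τ / 4) = ((Real.pi / 4 : ℝ) : ℂ) * (Complex.I * τ) by
      push_cast; ring, Complex.re_ofReal_mul]
    simp; ring
  have e2 : (τ / 2).im = τ.im / 2 := by simp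
  rw [e1, e2]
  have h3 : -(n:ℝ) ≤ |(n:ℝ)| := neg_le_abs _
  have h4 : (0:ℝ) ≤ (n + 1 / 2) ^ 2 := by positivity
  have h5 : (1 / 2 : ℝ) * (n + 1 / 2) ^ 2 ≤ τ.im * (n + 1 / 2) ^ 2 := by gcongr
  have h6 : 1 / 2 * (n:ℝ) ^ 2 - 2 * (1 / 4) * |(n:ℝ)| ≤ τ.im * (n + 1 / 2) ^ 2 := by nlinarith
  have := mul_le_mul_of_nonneg_left h6 Real.pi_pos.le
  push_cast
  nlinarith

/-- The Gaussian-weighted quadratic Weyl sum bound. -/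
lemma theta_weyl : ∃ C0 : ℝ, 1 ≤ C0 ∧ ∀ τ : UpperHalfPlane, ∃ c d : ℤ, (c ≠ 0 ∨ d ≠ 0) ∧
    ‖jacobiTheta τ‖ ^ 2 * ‖(c : ℂ) * τ + d‖ ≤ C0 := by
  obtain ⟨B, hB, hb⟩ := thM_bound
  refine ⟨max 1 (B ^ 2), le_max_left _ _, fun τ ↦ ?_⟩
  obtain ⟨g, hg⟩ := ModularGroup.exists_smul_mem_fd τ
  have him : 1 / 2 ≤ (g • τ).im := by
    have := ModularGroup.three_le_four_mul_im_sq_of_mem_fd hg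
    have := (g • τ).im_pos
    nlinarith
  refine ⟨g 1 0, g 1 1, ?_, ?_⟩
  · by_contra! h
    have := g.det_coe
    rw [Matrix.det_fin_two] at this
    simp [h.1, h.2] at this
  refine le_trans ?_ (le_max_right _ _)
  have h1 := thF_smul g τ
  have h2 : (g • τ).im = τ.im / ‖(g 1 0 : ℂ) * τ + g 1 1‖ ^ 2 := by
    rw [ModularGroup.im_smul_eq_div_normSq, ModularGroup.denom_apply, Complex.normSq_eq_norm_sq]
  have hne : 0 < ‖(g 1 0 : ℂ) * τ + g 1 1‖ := by
    by_contra! h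
    have h' : ‖(g 1 0 : ℂ) * τ + g 1 1‖ = 0 := le_antisymm h (norm_nonneg _)
    rw [h'] at h2
    simp at h2
    exact absurd h2 (g • τ).im_pos.ne'
  set r := ‖(g 1 0 : ℂ) * τ + g 1 1‖ with hr
  have h3 : thM τ ^ 4 * r ^ 2 ≤ B ^ 4 := by
    have hτ := τ.im_pos
    unfold thF at h1
    rw [h2] at h1
    have h4 : thM (g • τ : UpperHalfPlane) ^ 4 ≤ B ^ 4 := by
      have : 0 ≤ thM (g • τ : UpperHalfPlane) := le_max_of_le_right (norm_nonneg _)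
      gcongr
      exact hb _ him
    have h5 : thM (g • τ : UpperHalfPlane) ^ 4 = thM τ ^ 4 * r ^ 2 := by
      field_simp at h1
      linarith
    rw [← h5]; exact h4
  have h0 : ‖jacobiTheta τ‖ ≤ thM τ := by
    rw [jacobiTheta_eq_jacobiTheta₂]
    exact le_max_of_le_left (le_max_left _ _)
  have h6 : (‖jacobiTheta τ‖ ^ 2 * r) ^ 2 ≤ (B ^ 2) ^ 2 := by
    calc (‖jacobiTheta τ‖ ^ 2 * r) ^ 2 = ‖jacobiTheta τ‖ ^ 4 * r ^ 2 := by ring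
      _ ≤ thM τ ^ 4 * r ^ 2 := by gcongr
      _ ≤ _ := by rw [← pow_mul]; exact h3
  exact le_of_sq_le_sq h6 (by positivity)

/-! ### Part 2: divisor bounds -/

lemma divisor_bound (ε : ℝ) (hε : 0 < ε) : ∃ C : ℝ, 1 ≤ C ∧ ∀ k : ℕ, 1 ≤ k →
    (k.divisors.card : ℝ) ≤ C * (k : ℝ) ^ ε := by
  obtain ⟨P, hP⟩ := exists_nat_ge ((2:ℝ) ^ (1 / ε))
  have hl2 : 0 < Real.log 2 := Real.log_pos (by norm_num)
  set A : ℝ := 1 + 1 / (ε * Real.log 2) with hA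
  have hA1 : 1 ≤ A := by rw [hA]; have : 0 < 1 / (ε * Real.log 2) := by positivity
                         linarith
  refine ⟨A ^ P, one_le_pow₀ hA1, fun k hk ↦ ?_⟩
  have hk0 : k ≠ 0 := by omega
  rw [Nat.card_divisors hk0]
  have hkprod : (k : ℝ) ^ ε = ∏ p ∈ k.primeFactors, ((p : ℝ) ^ ε) ^ (k.factorization p) := by
    conv_lhs => rw [← Nat.prod_factorization_pow_eq_self hk0]
    rw [Finsupp.prod, Nat.support_factorization]
    push_cast
    rw [← Real.finsetProd_rpow _ _ (fun i _ ↦ by positivity)]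
    refine Finset.prod_congr rfl (fun p _ ↦ ?_)
    rw [← Real.rpow_natCast, ← Real.rpow_natCast, ← Real.rpow_mul (by positivity),
      ← Real.rpow_mul (by positivity), mul_comm]
  have h1 : ∀ p ∈ k.primeFactors, ((k.factorization p : ℝ) + 1) ≤
      (if p < P then A else 1) * ((p : ℝ) ^ ε) ^ (k.factorization p) := by
    intro p hp
    have hp2 : (2:ℝ) ≤ p := by exact_mod_cast (Nat.prime_of_mem_primeFactors hp).two_le
    set a := k.factorization p
    split_ifs with h
    · have e1 : ((2 : ℝ) ^ ε) ^ a ≤ ((p : ℝ) ^ ε) ^ a := by gcongr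
      have e2 : 1 + a * (ε * Real.log 2) ≤ ((2 : ℝ) ^ ε) ^ a := by
        rw [Real.rpow_def_of_pos (by norm_num), ← Real.exp_nat_mul]
        have := Real.add_one_le_exp ((a:ℝ) * (Real.log 2 * ε))
        linarith
      have e3 : (a:ℝ) + 1 ≤ A * (1 + a * (ε * Real.log 2)) := by
        have : A * (1 + a * (ε * Real.log 2)) = a + 1 + (1 / (ε * Real.log 2) +
          a * (ε * Real.log 2)) := by rw [hA]; field_simp; ring
        rw [this]
        have : 0 ≤ (1 / (ε * Real.log 2) + a * (ε * Real.log 2)) := by positivity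
        linarith
      exact e3.trans (by gcongr; exact e2.trans e1)
    · push Not at h
      have e0 : (2:ℝ) ≤ (p:ℝ) ^ ε := by
        calc (2:ℝ) = ((2:ℝ) ^ (1 / ε)) ^ ε := by
              rw [← Real.rpow_mul (by norm_num)]; field_simp; simp
          _ ≤ _ := by
              gcongr
              exact hP.trans (by exact_mod_cast h)
      have e1 : (2:ℝ) ^ a ≤ ((p : ℝ) ^ ε) ^ a := by gcongr
      have e2 : (a:ℝ) + 1 ≤ 2 ^ a := by exact_mod_cast Nat.lt_two_pow_self
      linarith
  push_cast
  calc ∏ x ∈ k.primeFactors, ((k.factorization x : ℝ) + 1)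
      ≤ ∏ p ∈ k.primeFactors, ((if p < P then A else 1) * ((p : ℝ) ^ ε) ^ (k.factorization p)) :=
        Finset.prod_le_prod (fun i _ ↦ by positivity) h1
    _ = (∏ p ∈ k.primeFactors, (if p < P then A else 1)) * (k:ℝ) ^ ε := by
        rw [Finset.prod_mul_distrib, hkprod]
    _ ≤ A ^ P * (k:ℝ) ^ ε := by
        gcongr
        rw [Finset.prod_ite, Finset.prod_const, Finset.prod_const_one, mul_one]
        apply pow_le_pow_right₀ hA1
        calc _ ≤ (Finset.range P).card := Finset.card_le_card (by
                intro x hx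
                simp at hx ⊢
                exact hx.2)
          _ = P := by simp

/-- truncated divisor function -/
def dQ (Q k : ℕ) : ℕ := ((Finset.Icc 1 Q).filter (· ∣ k)).card

lemma dQ_pow_le (B Q k : ℕ) : dQ Q k ^ B ≤
    ∑ m ∈ (Finset.Icc 1 (Q ^ B)).filter (· ∣ k), m.divisors.card ^ B := by
  classical
  set S := (Finset.Icc 1 Q).filter (· ∣ k) with hS
  have h1 : dQ Q k ^ B = (Fintype.piFinset (fun _ : Fin B ↦ S)).card := by
    simp [Fintype.card_piFinset, dQ, hS]
  rw [h1]
  calc _ ≤ (((Finset.Icc 1 (Q ^ B)).filter (· ∣ k)).biUnion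
        (fun m ↦ Fintype.piFinset (fun _ : Fin B ↦ m.divisors))).card := by
        apply Finset.card_le_card
        intro t ht
        rw [Fintype.mem_piFinset] at ht
        simp only [hS, Finset.mem_filter, Finset.mem_Icc] at ht
        rw [Finset.mem_biUnion]
        have hpos : 0 < (Finset.univ.lcm t) := by
          rw [Nat.pos_iff_ne_zero, Ne, Finset.lcm_eq_zero_iff]
          simp only [not_exists, not_and]
          intro i _ h
          have := (ht i).1.1
          omega
        refine ⟨Finset.univ.lcm t, ?_, ?_⟩
        · rw [Finset.mem_filter, Finset.mem_Icc]
          refine ⟨⟨hpos, ?_⟩, ?_⟩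
          · have h2 : Finset.univ.lcm t ∣ ∏ i, t i :=
              Finset.lcm_dvd (fun i _ ↦ Finset.dvd_prod_of_mem t (Finset.mem_univ i))
            have h3 : 0 < ∏ i, t i := Finset.prod_pos (fun i _ ↦ (ht i).1.1)
            refine (Nat.le_of_dvd h3 h2).trans ?_
            calc ∏ i, t i ≤ ∏ i : Fin B, Q := Finset.prod_le_prod' (fun i _ ↦ (ht i).1.2)
              _ = Q ^ B := by simp
          · exact Finset.lcm_dvd (fun i _ ↦ (ht i).2)
        · rw [Fintype.mem_piFinset]
          intro i
          rw [Nat.mem_divisors]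
          exact ⟨Finset.dvd_lcm (Finset.mem_univ i), hpos.ne'⟩
    _ ≤ ∑ m ∈ (Finset.Icc 1 (Q ^ B)).filter (· ∣ k),
          (Fintype.piFinset (fun _ : Fin B ↦ m.divisors)).card := Finset.card_biUnion_le
    _ = _ := by simp [Fintype.card_piFinset]

lemma dQ_moment : ∃ C : ℝ, 1 ≤ C ∧ ∀ Q K : ℕ, 1 ≤ Q →
    ∑ k ∈ Finset.Icc 1 K, (dQ Q k : ℝ) ^ 10 ≤ C * K * (Q : ℝ) ^ (1 / 8 : ℝ) := by
  obtain ⟨C, hC, hd⟩ := divisor_bound (1 / 1600) (by norm_num)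
  have hsum : Summable (fun m : ℕ ↦ 1 / (m : ℝ) ^ (1 + 1 / 160 : ℝ)) :=
    Real.summable_one_div_nat_rpow.2 (by norm_num)
  set Z := ∑' m : ℕ, 1 / (m : ℝ) ^ (1 + 1 / 160 : ℝ) with hZ
  have hZ0 : 0 ≤ Z := tsum_nonneg (fun m ↦ by positivity)
  refine ⟨C ^ 10 * Z + 1, by have : 0 ≤ C ^ 10 * Z := by positivity
                             linarith, fun Q K hQ ↦ ?_⟩
  have hQ' : (1:ℝ) ≤ Q := by exact_mod_cast hQ
  have hcount : ∀ m ∈ Finset.Icc 1 (Q ^ 10), (((Finset.Icc 1 K).filter (m ∣ ·)).card : ℝ) ≤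
      K / m := by
    intro m hm
    have : ((Finset.Icc 1 K).filter (m ∣ ·)).card = K / m := by
      rw [← Nat.Ioc_filter_dvd_card_eq_div]; rfl
    rw [this]
    exact Nat.cast_div_le
  have hterm : ∀ m ∈ Finset.Icc 1 (Q ^ 10), (m.divisors.card : ℝ) ^ 10 * (K / m) ≤
      C ^ 10 * K * (Q : ℝ) ^ (1 / 8 : ℝ) * (1 / (m : ℝ) ^ (1 + 1 / 160 : ℝ)) := by
    intro m hm
    rw [Finset.mem_Icc] at hm
    have hm0 : (0:ℝ) < m := by exact_mod_cast hm.1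
    have e1 : (m.divisors.card : ℝ) ^ 10 ≤ C ^ 10 * (m : ℝ) ^ (1 / 160 : ℝ) := by
      calc _ ≤ (C * (m : ℝ) ^ (1 / 1600 : ℝ)) ^ 10 := by gcongr; exact hd m hm.1
        _ = _ := by
          rw [mul_pow, ← Real.rpow_natCast ((m:ℝ) ^ _), ← Real.rpow_mul hm0.le]; norm_num
    have e2 : (m : ℝ) ^ (1 / 80 : ℝ) ≤ (Q : ℝ) ^ (1 / 8 : ℝ) := by
      calc (m : ℝ) ^ (1 / 80 : ℝ) ≤ ((Q : ℝ) ^ 10) ^ (1 / 80 : ℝ) := by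
            gcongr; exact_mod_cast hm.2
        _ = _ := by rw [← Real.rpow_natCast, ← Real.rpow_mul (by positivity)]; norm_num
    have e3 : (m : ℝ) ^ (1 / 160 : ℝ) * (K / m) = K * ((m : ℝ) ^ (1 / 80 : ℝ) *
        (1 / (m : ℝ) ^ (1 + 1 / 160 : ℝ))) := by
      rw [Real.rpow_add hm0, Real.rpow_one, show (1 / 80 : ℝ) = 1 / 160 + 1 / 160 by norm_num,
        Real.rpow_add hm0]
      field_simp
    calc _ ≤ C ^ 10 * (m : ℝ) ^ (1 / 160 : ℝ) * (K / m) := by gcongr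
      _ = C ^ 10 * (K * ((m : ℝ) ^ (1 / 80 : ℝ) * (1 / (m : ℝ) ^ (1 + 1 / 160 : ℝ)))) := by
          rw [mul_assoc, e3]
      _ ≤ C ^ 10 * (K * ((Q : ℝ) ^ (1 / 8 : ℝ) * (1 / (m : ℝ) ^ (1 + 1 / 160 : ℝ)))) := by gcongr
      _ = _ := by ring
  calc ∑ k ∈ Finset.Icc 1 K, (dQ Q k : ℝ) ^ 10
      ≤ ∑ k ∈ Finset.Icc 1 K, ∑ m ∈ Finset.Icc 1 (Q ^ 10),
          if m ∣ k then (m.divisors.card : ℝ) ^ 10 else 0 := by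
        refine Finset.sum_le_sum (fun k _ ↦ ?_)
        rw [← Finset.sum_filter]
        exact_mod_cast dQ_pow_le 10 Q k
    _ = ∑ m ∈ Finset.Icc 1 (Q ^ 10), (m.divisors.card : ℝ) ^ 10 *
          (((Finset.Icc 1 K).filter (m ∣ ·)).card : ℝ) := by
        rw [Finset.sum_comm]
        refine Finset.sum_congr rfl (fun m _ ↦ ?_)
        rw [← Finset.sum_filter, Finset.sum_const, nsmul_eq_mul, mul_comm]
    _ ≤ ∑ m ∈ Finset.Icc 1 (Q ^ 10), C ^ 10 * K * (Q : ℝ) ^ (1 / 8 : ℝ) *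
          (1 / (m : ℝ) ^ (1 + 1 / 160 : ℝ)) := by
        refine Finset.sum_le_sum (fun m hm ↦ le_trans ?_ (hterm m hm))
        gcongr
        exact hcount m hm
    _ = C ^ 10 * K * (Q : ℝ) ^ (1 / 8 : ℝ) * ∑ m ∈ Finset.Icc 1 (Q ^ 10),
          (1 / (m : ℝ) ^ (1 + 1 / 160 : ℝ)) := by rw [Finset.mul_sum]
    _ ≤ C ^ 10 * K * (Q : ℝ) ^ (1 / 8 : ℝ) * Z := by
        gcongr
        exact hsum.sum_le_tsum _ (fun m _ ↦ by positivity)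
    _ ≤ _ := by
        have : 0 ≤ K * (Q : ℝ) ^ (1 / 8 : ℝ) := by positivity
        nlinarith

/-! ### Part 3: exponential sums and level sets -/

/-- `e(x) = exp(2 π i x)` -/
def ee (x : ℝ) : ℂ := Complex.exp (2 * Real.pi * x * Complex.I)

lemma ee_add (x y : ℝ) : ee (x + y) = ee x * ee y := by
  simp only [ee, ← Complex.exp_add]; push_cast; ring_nf

lemma ee_zero : ee 0 = 1 := by simp [ee]

lemma norm_ee (x : ℝ) : ‖ee x‖ = 1 := by
  have := Complex.norm_exp_ofReal_mul_I (2 * Real.pi * x)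
  push_cast at this
  exact this

lemma ee_conj (x : ℝ) : (starRingEnd ℂ) (ee x) = ee (-x) := by
  simp only [ee, ← Complex.exp_conj]
  congr 1
  have : (2 * Real.pi * x * Complex.I : ℂ) = ((2 * Real.pi * x : ℝ) : ℂ) * Complex.I := by push_cast; ring
  rw [this, map_mul, Complex.conj_ofReal, Complex.conj_I]
  push_cast; ring

lemma ee_int (k : ℤ) : ee k = 1 := by
  have := Complex.exp_int_mul_two_pi_mul_I k
  rw [ee, ← this]
  congr 1
  push_cast
  ring

lemma ee_nat_mul (n : ℕ) (x : ℝ) : ee (n * x) = ee x ^ n := by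
  rw [ee, ee, ← Complex.exp_nat_mul]; congr 1; push_cast; ring

lemma ee_eq_one_iff (x : ℝ) : ee x = 1 ↔ ∃ k : ℤ, x = k := by
  rw [ee, Complex.exp_eq_one_iff]
  constructor
  · rintro ⟨k, hk⟩
    refine ⟨k, ?_⟩
    have h : (2 * Real.pi * Complex.I : ℂ) ≠ 0 := by
      simp [Real.pi_ne_zero]
    have : (2 * Real.pi * Complex.I : ℂ) * x = (2 * Real.pi * Complex.I) * k := by
      linear_combination hk
    have := mul_left_cancel₀ h this
    exact_mod_cast this
  · rintro ⟨k, rfl⟩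
    exact ⟨k, by push_cast; ring⟩

lemma ee_orth (M : ℕ) (hM : 1 ≤ M) (k : ℤ) :
    ∑ j ∈ Finset.range M, ee (j * (k / M)) = if (M : ℤ) ∣ k then (M : ℂ) else 0 := by
  have hM0 : (M : ℝ) ≠ 0 := by positivity
  simp_rw [ee_nat_mul]
  split_ifs with h
  · obtain ⟨d, rfl⟩ := h
    have : ee (((M * d : ℤ) : ℝ) / M) = 1 := by
      rw [ee_eq_one_iff]; refine ⟨d, ?_⟩; push_cast; field_simp
    rw [this]; simp
  · have hne : ee ((k : ℝ) / M) ≠ 1 := by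
      intro h1
      rw [ee_eq_one_iff] at h1
      obtain ⟨d, hd⟩ := h1
      apply h
      refine ⟨d, ?_⟩
      have : (k : ℝ) = M * d := by field_simp at hd; linarith
      exact_mod_cast this
    have hp : ee ((k : ℝ) / M) ^ M = 1 := by
      rw [← ee_nat_mul, ee_eq_one_iff]
      exact ⟨k, by field_simp⟩
    rw [geom_sum_eq hne, hp]; simp

/-- Fourier transform of the indicator function of a set of frequencies. -/
def EH (M : ℕ) (E : Finset ℕ) (k : ℤ) : ℂ := ∑ j ∈ E, ee (j * (k / M))

lemma EH_norm_le (M : ℕ) (E : Finset ℕ) (k : ℤ) : ‖EH M E k‖ ≤ E.card := by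
  unfold EH
  refine (norm_sum_le _ _).trans ?_
  simp [norm_ee]

lemma EH_normSq (M : ℕ) (E : Finset ℕ) (k : ℤ) : ((‖EH M E k‖ ^ 2 : ℝ) : ℂ) =
    ∑ j ∈ E, ∑ j' ∈ E, ee (((j : ℝ) - j') * (k / M)) := by
  push_cast
  rw [← Complex.mul_conj', EH, map_sum, Finset.sum_mul_sum]
  refine Finset.sum_congr rfl (fun j _ ↦ Finset.sum_congr rfl (fun j' _ ↦ ?_))
  rw [ee_conj, ← ee_add]; congr 1; ring

lemma EH_neg (M : ℕ) (E : Finset ℕ) (k : ℤ) : ‖EH M E (-k)‖ = ‖EH M E k‖ := by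
  rw [← Complex.norm_conj (EH M E k), EH, EH, map_sum]
  congr 1
  refine Finset.sum_congr rfl (fun j _ ↦ ?_)
  rw [ee_conj]; congr 1; push_cast; ring

lemma EH_bessel (M : ℕ) (hM : 1 ≤ M) (E : Finset ℕ) (hE : E ⊆ Finset.range M) (K : ℕ)
    (hK : K ≤ M) : ∑ k ∈ Finset.Icc 1 K, ‖EH M E k‖ ^ 2 ≤ M * E.card := by
  have h1 : ∑ k ∈ Finset.Icc 1 K, ‖EH M E k‖ ^ 2 ≤ ∑ k ∈ Finset.Icc 1 M, ‖EH M E k‖ ^ 2 :=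
    Finset.sum_le_sum_of_subset_of_nonneg (Finset.Icc_subset_Icc_right hK)
      (fun _ _ _ ↦ by positivity)
  refine h1.trans (le_of_eq ?_)
  have hper : ∀ j j' : ℕ, ∑ k ∈ Finset.Icc 1 M, ee (((j : ℝ) - j') * (((k:ℕ):ℤ) / M)) =
      if (M : ℤ) ∣ (j : ℤ) - j' then (M : ℂ) else 0 := by
    intro j j'
    rw [← ee_orth M hM]
    have e : Finset.Icc 1 M = (Finset.range M).map ⟨(· + 1), add_left_injective 1⟩ := by
      ext x; simp only [Finset.mem_Icc, Finset.mem_map, Finset.mem_range,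
        Function.Embedding.coeFn_mk]
      constructor
      · rintro ⟨h1, h2⟩; exact ⟨x - 1, by omega, by omega⟩
      · rintro ⟨a, h1, rfl⟩; omega
    rw [e, Finset.sum_map]
    have h2 := Finset.sum_range_succ (fun k : ℕ ↦ ee (((j : ℝ) - j') * ((k:ℝ) / M))) M
    have h3 := Finset.sum_range_succ' (fun k : ℕ ↦ ee (((j : ℝ) - j') * ((k:ℝ) / M))) M
    have h4 : ee (((j : ℝ) - j') * ((M:ℝ) / M)) = 1 := by
      rw [ee_eq_one_iff]; refine ⟨(j : ℤ) - j', ?_⟩; field_simp; push_cast; ring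
    have h5 : ee (((j : ℝ) - j') * (((0:ℕ):ℝ) / M)) = 1 := by simp [ee_zero]
    rw [h4] at h2; rw [h5, h2] at h3
    have h6 := add_right_cancel h3
    calc _ = ∑ k ∈ range M, ee (((j : ℝ) - j') * (((k+1 : ℕ):ℝ) / M)) := by
          refine Finset.sum_congr rfl (fun k _ ↦ ?_); rfl
      _ = _ := by
          rw [← h6]
          refine Finset.sum_congr rfl (fun k _ ↦ ?_); push_cast; congr 1; ring
  have h2 : ((∑ k ∈ Finset.Icc 1 M, ‖EH M E k‖ ^ 2 : ℝ) : ℂ) = ((M * E.card : ℝ) : ℂ) := by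
    push_cast
    have : ∀ k ∈ Finset.Icc 1 M, ((‖EH M E k‖ : ℂ) ^ 2) =
      ∑ j ∈ E, ∑ j' ∈ E, ee (((j : ℝ) - j') * (((k:ℕ) : ℤ) / M)) := by
      intro k _
      have := EH_normSq M E k
      push_cast at this ⊢
      exact this
    rw [Finset.sum_congr rfl this, Finset.sum_comm]
    have : ∀ j ∈ E, ∑ k ∈ Finset.Icc 1 M, ∑ j' ∈ E, ee (((j : ℝ) - j') * (((k:ℕ):ℤ) / M)) =
        (M : ℂ) := by
      intro j hj
      rw [Finset.sum_comm]
      rw [Finset.sum_eq_single_of_mem j hj]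
      · rw [hper]; simp
      · intro j' hj' hne
        rw [hper, if_neg]
        rintro h
        have a1 := Finset.mem_range.1 (hE hj)
        have a2 := Finset.mem_range.1 (hE hj')
        have := Int.eq_zero_of_abs_lt_dvd h (by rw [abs_lt]; constructor <;> omega)
        omega
    rw [Finset.sum_congr rfl this]
    simp [mul_comm]
  exact_mod_cast h2

/-- Fejér-type sum lower bound. -/
lemma fejer_lower (L : ℕ) (φ : ℝ) (d : ℤ) (h : |φ - d| * (8 * L) ≤ 1) :
    (L : ℝ) / 2 ≤ ‖∑ l ∈ Finset.range L, ee (l * φ)‖ := by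
  refine le_trans ?_ (Complex.re_le_norm _)
  rw [Complex.re_sum]
  have : ∀ l ∈ Finset.range L, (1 / 2 : ℝ) ≤ (ee (l * φ)).re := by
    intro l hl
    rw [Finset.mem_range] at hl
    have e1 : ee (l * φ) = ee (l * (φ - d)) := by
      have : (l : ℝ) * φ = l * (φ - d) + ((l * d : ℤ) : ℝ) := by push_cast; ring
      rw [this, ee_add, ee_int, mul_one]
    rw [e1]
    have e2 : (ee (l * (φ - d))).re = Real.cos (2 * Real.pi * (l * (φ - d))) := by
      rw [ee]
      have := Complex.exp_ofReal_mul_I_re (2 * Real.pi * (l * (φ - d)))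
      push_cast at this ⊢
      exact this
    rw [e2]
    have hl' : (l : ℝ) ≤ L := by exact_mod_cast hl.le
    have h1 : |l * (φ - d)| ≤ 1 / 8 := by
      rw [abs_mul, Nat.abs_cast]
      have : (l : ℝ) * |φ - d| ≤ L * |φ - d| := by gcongr
      nlinarith
    have hpi := Real.pi_lt_four
    have h2 : |2 * Real.pi * (l * (φ - d))| ≤ 1 := by
      rw [abs_mul, abs_of_pos (by positivity)]
      nlinarith [Real.pi_pos, abs_nonneg (l * (φ - d))]
    have h3 := Real.one_sub_sq_div_two_le_cos (x := 2 * Real.pi * (l * (φ - d)))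
    have h4 : (2 * Real.pi * (l * (φ - d))) ^ 2 ≤ 1 := by
      rw [← sq_abs]; nlinarith [abs_nonneg (2 * Real.pi * (l * (φ - d)))]
    linarith
  calc (L : ℝ) / 2 = ∑ l ∈ Finset.range L, (1 / 2 : ℝ) := by simp; ring
    _ ≤ _ := Finset.sum_le_sum this

lemma sum_natdist_le (L l : ℕ) (hl : l < L) (u : ℕ → ℝ) (hu : ∀ h, 0 ≤ u h) :
    ∑ l' ∈ Finset.range L, u ((l : ℤ) - l').natAbs ≤ 2 * ∑ h ∈ Finset.range L, u h := by
  rw [← Finset.sum_filter_add_sum_filter_not (Finset.range L) (· ≤ l), two_mul]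
  apply add_le_add
  · rw [← Finset.sum_image (s := (Finset.range L).filter (· ≤ l))
      (g := fun l' : ℕ ↦ ((l : ℤ) - l').natAbs) (f := u)]
    · refine Finset.sum_le_sum_of_subset_of_nonneg ?_ (fun _ _ _ ↦ hu _)
      intro x hx
      simp at hx ⊢
      omega
    · intro a ha b hb hab
      simp at ha hb hab
      omega
  · rw [← Finset.sum_image (s := (Finset.range L).filter (fun x ↦ ¬ (x ≤ l)))
      (g := fun l' : ℕ ↦ ((l : ℤ) - l').natAbs) (f := u)]
    · refine Finset.sum_le_sum_of_subset_of_nonneg ?_ (fun _ _ _ ↦ hu _)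
      intro x hx
      simp at hx ⊢
      omega
    · intro a ha b hb hab
      simp at ha hb hab
      omega

open Classical in
/-- The number of pairs in `E` whose difference is close to a rational of denominator `q`. -/
lemma pair_count_q (M : ℕ) (E : Finset ℕ) (q L : ℕ) (hL : 1 ≤ L) :
    ((((E ×ˢ E).filter (fun p : ℕ × ℕ ↦ ∃ d : ℤ,
      |(q : ℝ) * (((p.1 : ℝ) - p.2) / M) - d| * (8 * L) ≤ 1)).card : ℕ) : ℝ) ≤
    8 / L * ((E.card : ℝ) ^ 2 + ∑ h ∈ Finset.Icc 1 (L - 1), ‖EH M E ((q * h : ℕ) : ℤ)‖ ^ 2) := by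
  have hL0 : (0:ℝ) < L := by exact_mod_cast hL
  set W : ℕ × ℕ → ℝ := fun p ↦ ‖∑ l ∈ Finset.range L, ee (l * (q * (((p.1 : ℝ) - p.2) / M)))‖ ^ 2
    with hW
  have h1 : ((((E ×ˢ E).filter (fun p : ℕ × ℕ ↦ ∃ d : ℤ,
      |(q : ℝ) * (((p.1 : ℝ) - p.2) / M) - d| * (8 * L) ≤ 1)).card : ℕ) : ℝ) * (L / 2) ^ 2 ≤
      ∑ p ∈ E ×ˢ E, W p := by
    rw [← nsmul_eq_mul, ← Finset.sum_const]
    calc _ ≤ ∑ p ∈ (E ×ˢ E).filter (fun p : ℕ × ℕ ↦ ∃ d : ℤ,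
          |(q : ℝ) * (((p.1 : ℝ) - p.2) / M) - d| * (8 * L) ≤ 1), W p := by
          refine Finset.sum_le_sum (fun p hp ↦ ?_)
          obtain ⟨d, hd⟩ := (Finset.mem_filter.1 hp).2
          have := fejer_lower L _ d hd
          simp only [hW]
          gcongr
      _ ≤ _ := Finset.sum_le_sum_of_subset_of_nonneg (Finset.filter_subset _ _)
          (fun _ _ _ ↦ by positivity)
  have h2 : ∑ p ∈ E ×ˢ E, W p = ∑ l ∈ Finset.range L, ∑ l' ∈ Finset.range L,
      ‖EH M E ((q : ℤ) * ((l : ℤ) - l'))‖ ^ 2 := by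
    have : ((∑ p ∈ E ×ˢ E, W p : ℝ) : ℂ) = ((∑ l ∈ Finset.range L, ∑ l' ∈ Finset.range L,
      ‖EH M E ((q : ℤ) * ((l : ℤ) - l'))‖ ^ 2 : ℝ) : ℂ) := by
      rw [Complex.ofReal_sum, Complex.ofReal_sum]
      simp_rw [Complex.ofReal_sum, EH_normSq]
      have : ∀ p : ℕ × ℕ, ((W p : ℝ) : ℂ) = ∑ l ∈ Finset.range L, ∑ l' ∈ Finset.range L,
          ee (((p.1 : ℝ) - p.2) * (((q : ℤ) * ((l : ℤ) - l') : ℤ) / M)) := by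
        intro p
        simp only [hW]
        push_cast
        rw [← Complex.mul_conj', map_sum, Finset.sum_mul_sum]
        refine Finset.sum_congr rfl (fun l _ ↦ Finset.sum_congr rfl (fun l' _ ↦ ?_))
        rw [ee_conj, ← ee_add]; congr 1; ring
      simp_rw [this]
      rw [Finset.sum_comm]
      refine Finset.sum_congr rfl (fun l _ ↦ ?_)
      rw [Finset.sum_comm]
      refine Finset.sum_congr rfl (fun l' _ ↦ ?_)
      rw [Finset.sum_product]
    exact_mod_cast this
  have h3 : ∑ l ∈ Finset.range L, ∑ l' ∈ Finset.range L,
      ‖EH M E ((q : ℤ) * ((l : ℤ) - l'))‖ ^ 2 ≤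
      L * (2 * ((E.card : ℝ) ^ 2 + ∑ h ∈ Finset.Icc 1 (L - 1), ‖EH M E ((q * h : ℕ) : ℤ)‖ ^ 2)) := by
    have e1 : ∀ l ∈ Finset.range L, ∑ l' ∈ Finset.range L,
      ‖EH M E ((q : ℤ) * ((l : ℤ) - l'))‖ ^ 2 ≤
        (2 * ((E.card : ℝ) ^ 2 + ∑ h ∈ Finset.Icc 1 (L - 1), ‖EH M E ((q * h : ℕ) : ℤ)‖ ^ 2)) := by
      intro l hl
      have := sum_natdist_le L l (Finset.mem_range.1 hl) (fun h ↦ ‖EH M E ((q * h : ℕ) : ℤ)‖ ^ 2)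
        (fun h ↦ by positivity)
      calc _ = ∑ l' ∈ Finset.range L, ‖EH M E ((q * ((l : ℤ) - l').natAbs : ℕ) : ℤ)‖ ^ 2 := by
            refine Finset.sum_congr rfl (fun l' _ ↦ ?_)
            congr 1
            push_cast
            rcases abs_choice ((l : ℤ) - l') with h | h
            · rw [h]
            · rw [h, mul_neg, EH_neg]
        _ ≤ _ := this
        _ ≤ _ := by
            gcongr
            obtain ⟨L', rfl⟩ : ∃ L', L = L' + 1 := ⟨L - 1, by omega⟩
            rw [Finset.sum_range_succ', add_comm]
            apply add_le_add
            · have := EH_norm_le M E ((q * 0 : ℕ) : ℤ)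
              gcongr
            · rw [Finset.range_eq_Ico, Finset.sum_Ico_add' (fun h ↦ ‖EH M E ((q * h : ℕ) : ℤ)‖ ^ 2) 0 L' 1]
              apply le_of_eq
              apply Finset.sum_congr _ (fun _ _ ↦ rfl)
              ext x; simp
    calc _ ≤ ∑ l ∈ Finset.range L, _ := Finset.sum_le_sum e1
      _ = _ := by rw [Finset.sum_const, nsmul_eq_mul, Finset.card_range]
  rw [h2] at h1
  have h4 := h1.trans h3
  rw [div_mul_eq_mul_div, le_div_iff₀ hL0]
  have : ∀ a b : ℝ, a * (L / 2) ^ 2 ≤ L * (2 * b) → a * L ≤ 8 * b := by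
    intro a b h
    have : L * (a * L) ≤ L * (8 * b) := by nlinarith
    exact le_of_mul_le_mul_left this hL0
  exact this _ _ h4

open Classical in
lemma pair_count (M : ℕ) (E : Finset ℕ) (Q L K : ℕ) (hL : 1 ≤ L) (hK : Q * L ≤ K) :
    ((((E ×ˢ E).filter (fun p : ℕ × ℕ ↦ ∃ q ∈ Finset.Icc 1 Q, ∃ d : ℤ,
      |(q : ℝ) * (((p.1 : ℝ) - p.2) / M) - d| * (8 * L) ≤ 1)).card : ℕ) : ℝ) ≤
    8 / L * (Q * (E.card : ℝ) ^ 2 + ∑ k ∈ Finset.Icc 1 K, dQ Q k * ‖EH M E k‖ ^ 2) := by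
  have h1 : ((E ×ˢ E).filter (fun p : ℕ × ℕ ↦ ∃ q ∈ Finset.Icc 1 Q, ∃ d : ℤ,
      |(q : ℝ) * (((p.1 : ℝ) - p.2) / M) - d| * (8 * L) ≤ 1)).card ≤
      ∑ q ∈ Finset.Icc 1 Q, ((E ×ˢ E).filter (fun p : ℕ × ℕ ↦ ∃ d : ℤ,
      |(q : ℝ) * (((p.1 : ℝ) - p.2) / M) - d| * (8 * L) ≤ 1)).card := by
    refine le_trans (Finset.card_le_card ?_) Finset.card_biUnion_le
    intro p hp
    obtain ⟨hp, q, hq, hd⟩ := by simpa only [Finset.mem_filter] using hp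
    exact Finset.mem_biUnion.2 ⟨q, hq, Finset.mem_filter.2 ⟨hp, hd⟩⟩
  have h2 : ∑ q ∈ Finset.Icc 1 Q, ∑ h ∈ Finset.Icc 1 (L - 1), ‖EH M E ((q * h : ℕ) : ℤ)‖ ^ 2 ≤
      ∑ k ∈ Finset.Icc 1 K, dQ Q k * ‖EH M E k‖ ^ 2 := by
    calc _ ≤ ∑ q ∈ Finset.Icc 1 Q, ∑ k ∈ Finset.Icc 1 K,
          if q ∣ k then ‖EH M E k‖ ^ 2 else 0 := by
          refine Finset.sum_le_sum (fun q hq ↦ ?_)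
          rw [Finset.mem_Icc] at hq
          rw [← Finset.sum_filter, ← Finset.sum_image (s := Finset.Icc 1 (L - 1))
            (g := fun h : ℕ ↦ q * h) (f := fun k : ℕ ↦ ‖EH M E (k : ℤ)‖ ^ 2)]
          · refine Finset.sum_le_sum_of_subset_of_nonneg ?_ (fun _ _ _ ↦ by positivity)
            intro x hx
            simp only [Finset.mem_image, Finset.mem_Icc, Finset.mem_filter] at hx ⊢
            obtain ⟨h, hh, rfl⟩ := hx
            refine ⟨⟨Nat.mul_pos hq.1 hh.1, le_trans ?_ hK⟩, Dvd.intro h rfl⟩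
            exact Nat.mul_le_mul hq.2 (by omega)
          · intro a _ b _ hab
            exact Nat.eq_of_mul_eq_mul_left hq.1 hab
      _ = _ := by
          rw [Finset.sum_comm]
          refine Finset.sum_congr rfl (fun k _ ↦ ?_)
          rw [← Finset.sum_filter, Finset.sum_const, nsmul_eq_mul, dQ]
  calc _ ≤ ((∑ q ∈ Finset.Icc 1 Q, ((E ×ˢ E).filter (fun p : ℕ × ℕ ↦ ∃ d : ℤ,
      |(q : ℝ) * (((p.1 : ℝ) - p.2) / M) - d| * (8 * L) ≤ 1)).card : ℕ) : ℝ) := by exact_mod_cast h1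
    _ ≤ ∑ q ∈ Finset.Icc 1 Q, 8 / L * ((E.card : ℝ) ^ 2 +
          ∑ h ∈ Finset.Icc 1 (L - 1), ‖EH M E ((q * h : ℕ) : ℤ)‖ ^ 2) := by
        push_cast
        exact Finset.sum_le_sum (fun q _ ↦ pair_count_q M E q L hL)
    _ ≤ _ := by
        rw [← Finset.mul_sum, Finset.sum_add_distrib]
        gcongr
        simp

/-! ### Part 4: Weyl sums and the level set estimate -/

/-- Size of the smoothed Weyl sum of length `N` at frequency `α`. -/
def kap (N : ℕ) (α : ℝ) : ℝ := ‖jacobiTheta (2 * (α : ℂ) + Complex.I / (N : ℂ) ^ 2)‖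

/-- The conclusion of `theta_weyl` for a given constant. -/
def ThetaBd (C0 : ℝ) : Prop := ∀ τ : UpperHalfPlane, ∃ c d : ℤ, (c ≠ 0 ∨ d ≠ 0) ∧
  ‖jacobiTheta τ‖ ^ 2 * ‖(c : ℂ) * τ + d‖ ≤ C0

lemma kap_weyl (C0 : ℝ) (H : ThetaBd C0) (N : ℕ) (hN : 1 ≤ N) (α : ℝ) :
    ∃ c d : ℤ, (c ≠ 0 ∨ d ≠ 0) ∧ kap N α ^ 2 * |2 * c * α + d| ≤ C0 ∧
      kap N α ^ 2 * (|(c : ℝ)| / (N : ℝ) ^ 2) ≤ C0 := by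
  have hN0 : (0 : ℝ) < N := by exact_mod_cast hN
  have him : (2 * (α : ℂ) + Complex.I / (N : ℂ) ^ 2) = ((2 * α : ℝ) : ℂ) + ((1 / (N : ℝ) ^ 2 : ℝ) : ℂ) * Complex.I := by
    push_cast; ring
  have hre1 : (2 * (α : ℂ) + Complex.I / (N : ℂ) ^ 2).re = 2 * α := by
    rw [him, Complex.add_re, Complex.re_ofReal_mul]; simp only [Complex.ofReal_re, Complex.I_re]; ring
  have him1 : (2 * (α : ℂ) + Complex.I / (N : ℂ) ^ 2).im = 1 / (N : ℝ) ^ 2 := by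
    rw [him, Complex.add_im, Complex.im_ofReal_mul]; simp only [Complex.ofReal_im, Complex.I_im]; ring
  obtain ⟨c, d, hcd, h⟩ := H ⟨2 * (α : ℂ) + Complex.I / (N : ℂ) ^ 2, by rw [him1]; positivity⟩
  refine ⟨c, d, hcd, ?_, ?_⟩
  · refine le_trans ?_ h
    have := Complex.abs_re_le_norm ((c : ℂ) * (2 * (α : ℂ) + Complex.I / (N : ℂ) ^ 2) + d)
    have e : ((c : ℂ) * (2 * (α : ℂ) + Complex.I / (N : ℂ) ^ 2) + d).re = 2 * c * α + d := by
      rw [Complex.add_re, Complex.mul_re, hre1]; simp; ring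
    rw [e] at this
    unfold kap
    exact mul_le_mul_of_nonneg_left this (by positivity)
  · refine le_trans ?_ h
    have := Complex.abs_im_le_norm ((c : ℂ) * (2 * (α : ℂ) + Complex.I / (N : ℂ) ^ 2) + d)
    have e : ((c : ℂ) * (2 * (α : ℂ) + Complex.I / (N : ℂ) ^ 2) + d).im = c * (1 / (N : ℝ) ^ 2) := by
      rw [Complex.add_im, Complex.mul_im, him1]; simp
    rw [e, abs_mul, abs_of_pos (by positivity : (0:ℝ) < 1 / (N : ℝ) ^ 2)] at this
    unfold kap
    refine mul_le_mul_of_nonneg_left (le_trans (le_of_eq ?_) this) (by positivity)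
    ring

lemma one_le_abs_int (c : ℤ) (hc : c ≠ 0) : (1 : ℝ) ≤ |(c : ℝ)| := by
  have := Int.one_le_abs hc
  exact_mod_cast this

lemma kap_le (C0 : ℝ) (hC0 : 1 ≤ C0) (H : ThetaBd C0) (N : ℕ) (hN : 1 ≤ N) (α : ℝ) :
    kap N α ≤ C0 * N := by
  have hN0 : (1 : ℝ) ≤ N := by exact_mod_cast hN
  have hk : 0 ≤ kap N α := norm_nonneg _
  obtain ⟨c, d, hcd, h1, h2⟩ := kap_weyl C0 H N hN α
  have key : kap N α ^ 2 ≤ C0 * N ^ 2 := by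
    by_cases hc : c = 0
    · have hd := one_le_abs_int d (hcd.resolve_left (by simpa using hc))
      rw [hc] at h1
      simp only [Int.cast_zero, mul_zero, zero_mul, zero_add] at h1
      have : kap N α ^ 2 ≤ C0 := le_trans (by nlinarith [sq_nonneg (kap N α)]) h1
      have : C0 * 1 ≤ C0 * (N : ℝ) ^ 2 := by gcongr; nlinarith
      linarith
    · have := one_le_abs_int c hc
      rw [mul_div_assoc', div_le_iff₀ (by positivity)] at h2
      nlinarith [sq_nonneg (kap N α)]
  apply le_of_sq_le_sq _ (by positivity)
  nlinarith [sq_nonneg (N : ℝ)]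

lemma kap_large (C0 : ℝ) (hC0 : 1 ≤ C0) (H : ThetaBd C0) (N : ℕ) (hN : 1 ≤ N) (α s : ℝ)
    (hs : 0 < s) (hsN : C0 < s ^ 2 * N ^ 2) (hk : s * N ≤ kap N α) :
    ∃ q ∈ Finset.Icc 1 ⌊2 * C0 / s ^ 2⌋₊, ∃ d : ℤ, |(q : ℝ) * α - d| ≤ C0 / (s ^ 2 * N ^ 2) := by
  have hN0 : (1 : ℝ) ≤ N := by exact_mod_cast hN
  obtain ⟨c, d, hcd, h1, h2⟩ := kap_weyl C0 H N hN α
  have hk2 : s ^ 2 * N ^ 2 ≤ kap N α ^ 2 := by rw [← mul_pow]; gcongr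
  have hpos : 0 < s ^ 2 * (N:ℝ) ^ 2 := by positivity
  have h1' : |2 * c * α + d| ≤ C0 / (s ^ 2 * N ^ 2) := by
    rw [le_div_iff₀ hpos]
    nlinarith [abs_nonneg (2 * c * α + d)]
  have h2' : |(c : ℝ)| ≤ C0 / s ^ 2 := by
    rw [le_div_iff₀ (by positivity)]
    rw [mul_div_assoc', div_le_iff₀ (by positivity)] at h2
    have : (|(c : ℝ)| * s ^ 2) * N ^ 2 ≤ C0 * N ^ 2 := by nlinarith [abs_nonneg (c : ℝ)]
    exact le_of_mul_le_mul_right this (by positivity)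
  have hc : c ≠ 0 := by
    rintro rfl
    have hd := one_le_abs_int d (hcd.resolve_left (by simp))
    simp only [Int.cast_zero, mul_zero, zero_mul, zero_add] at h1'
    have : C0 / (s ^ 2 * N ^ 2) < 1 := by rw [div_lt_one hpos]; exact hsN
    linarith
  have hna : ((2 * c.natAbs : ℕ) : ℝ) = 2 * |(c : ℝ)| := by
    push_cast
    simp [Nat.cast_natAbs]
  refine ⟨2 * c.natAbs, ?_, ?_⟩
  · rw [Finset.mem_Icc]
    refine ⟨by have := Int.natAbs_pos.2 hc; omega, Nat.le_floor ?_⟩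
    rw [hna, mul_div_assoc]; linarith
  · rw [hna]
    rcases abs_choice (c : ℝ) with h | h
    · refine ⟨-d, ?_⟩
      rw [h]; push_cast; simpa using h1'
    · refine ⟨d, ?_⟩
      rw [h, abs_sub_comm]
      have : (d : ℝ) - 2 * -(c : ℝ) * α = 2 * c * α + d := by ring
      rwa [this]

open Classical in
lemma kap_pairs (C0 : ℝ) (hC0 : 1 ≤ C0) (H : ThetaBd C0) (N : ℕ) (hN : 1 ≤ N) (M : ℕ)
    (E : Finset ℕ) (s : ℝ) (hs : 0 < s) (hsN : 8 * C0 ≤ s ^ 2 * N ^ 2) (Q' : ℕ)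
    (hQ' : 2 * C0 / s ^ 2 ≤ Q') :
    (((E ×ˢ E).filter (fun p : ℕ × ℕ ↦ s * N ≤ kap N (((p.1 : ℝ) - p.2) / M))).card : ℝ) ≤
      128 * C0 / (s ^ 2 * N ^ 2) * (2 * C0 / s ^ 2 * (E.card : ℝ) ^ 2 +
        ∑ k ∈ Finset.Icc 1 (N ^ 2), dQ Q' k * ‖EH M E k‖ ^ 2) := by
  have hN0 : (1 : ℝ) ≤ N := by exact_mod_cast hN
  have hpos : 0 < s ^ 2 * (N:ℝ) ^ 2 := by positivity
  set X : ℝ := s ^ 2 * N ^ 2 / (8 * C0) with hX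
  have hX1 : 1 ≤ X := by rw [hX, one_le_div (by positivity)]; exact hsN
  set L := ⌊X⌋₊ with hL
  have hL1 : 1 ≤ L := Nat.le_floor (by simpa using hX1)
  have hLX : (L : ℝ) ≤ X := Nat.floor_le (by linarith)
  have hXL : X / 2 ≤ L := by
    have := Nat.lt_floor_add_one X
    have h1 : (1 : ℝ) ≤ L := by exact_mod_cast hL1
    rw [← hL] at this
    linarith
  set Q := ⌊2 * C0 / s ^ 2⌋₊ with hQ
  have hQX : (Q : ℝ) ≤ 2 * C0 / s ^ 2 := Nat.floor_le (by positivity)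
  have hQQ : Q ≤ Q' := by exact_mod_cast hQX.trans hQ'
  have hQL : Q * L ≤ N ^ 2 := by
    have : (Q : ℝ) * L ≤ N ^ 2 := by
      calc (Q : ℝ) * L ≤ (2 * C0 / s ^ 2) * X := by gcongr
        _ = N ^ 2 / 4 := by rw [hX]; field_simp; ring
        _ ≤ N ^ 2 := by nlinarith [sq_nonneg (N : ℝ)]
    exact_mod_cast this
  have hpc := pair_count M E Q L (N ^ 2) hL1 hQL
  refine le_trans (b := ((((E ×ˢ E).filter (fun p : ℕ × ℕ ↦ ∃ q ∈ Finset.Icc 1 Q, ∃ d : ℤ,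
      |(q : ℝ) * (((p.1 : ℝ) - p.2) / M) - d| * (8 * L) ≤ 1)).card : ℕ) : ℝ)) ?_ ?_
  · refine Nat.cast_le.2 (Finset.card_le_card ?_)
    intro p hp
    simp only [Finset.mem_filter] at hp ⊢
    refine ⟨hp.1, ?_⟩
    obtain ⟨q, hq, d, hd⟩ := kap_large C0 hC0 H N hN _ s hs (by linarith) hp.2
    refine ⟨q, hq, d, ?_⟩
    calc _ ≤ C0 / (s ^ 2 * N ^ 2) * (8 * X) := by gcongr
      _ = 1 := by rw [hX]; field_simp
  · refine le_trans (b := 8 / (L : ℝ) * (Q * (E.card : ℝ) ^ 2 + ∑ k ∈ Finset.Icc 1 (N ^ 2), dQ Q k * ‖EH M E k‖ ^ 2)) ?_ ?_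
    · convert hpc
    · show _ ≤ _
      have e1 : 8 / (L : ℝ) ≤ 128 * C0 / (s ^ 2 * N ^ 2) := by
        calc 8 / (L : ℝ) ≤ 8 / (X / 2) := by gcongr
          _ = _ := by rw [hX]; field_simp; norm_num
      have e2 : ∀ k, dQ Q k ≤ dQ Q' k := fun k ↦ Finset.card_le_card
        (Finset.filter_subset_filter _ (Finset.Icc_subset_Icc_right hQQ))
      have e3 : ∑ k ∈ Finset.Icc 1 (N ^ 2), (dQ Q k : ℝ) * ‖EH M E k‖ ^ 2 ≤
          ∑ k ∈ Finset.Icc 1 (N ^ 2), (dQ Q' k : ℝ) * ‖EH M E k‖ ^ 2 := by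
        refine Finset.sum_le_sum (fun k _ ↦ ?_)
        have := e2 k
        gcongr
      have e4 : 0 ≤ ∑ k ∈ Finset.Icc 1 (N ^ 2), (dQ Q k : ℝ) * ‖EH M E k‖ ^ 2 :=
        Finset.sum_nonneg (fun _ _ ↦ by positivity)
      gcongr

lemma dQ_sum_bound : ∃ C : ℝ, 1 ≤ C ∧ ∀ (M N Q : ℕ) (E : Finset ℕ) (D : ℝ), 1 ≤ M → N ^ 2 ≤ M →
    1 ≤ Q → E ⊆ Finset.range M → 0 < D →
    ∑ k ∈ Finset.Icc 1 (N ^ 2), dQ Q k * ‖EH M E k‖ ^ 2 ≤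
      D * (M * E.card) + C * N ^ 2 * (Q : ℝ) ^ (1 / 8 : ℝ) / D ^ 9 * (E.card : ℝ) ^ 2 := by
  obtain ⟨C, hC, h⟩ := dQ_moment
  refine ⟨C, hC, fun M N Q E D hM hN hQ hE hD ↦ ?_⟩
  have h1 : ∀ k ∈ Finset.Icc 1 (N ^ 2), (dQ Q k : ℝ) * ‖EH M E k‖ ^ 2 ≤
      D * ‖EH M E k‖ ^ 2 + (dQ Q k : ℝ) ^ 10 * ((E.card : ℝ) ^ 2 / D ^ 9) := by
    intro k _
    by_cases hk : (dQ Q k : ℝ) ≤ D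
    · have : 0 ≤ (dQ Q k : ℝ) ^ 10 * ((E.card : ℝ) ^ 2 / D ^ 9) := by positivity
      have := mul_le_mul_of_nonneg_right hk (sq_nonneg ‖EH M E k‖)
      linarith
    · push Not at hk
      have e1 : (dQ Q k : ℝ) ≤ (dQ Q k : ℝ) ^ 10 / D ^ 9 := by
        rw [le_div_iff₀ (by positivity)]
        calc (dQ Q k : ℝ) * D ^ 9 ≤ dQ Q k * (dQ Q k : ℝ) ^ 9 := by gcongr
          _ = _ := by ring
      have e2 : ‖EH M E k‖ ^ 2 ≤ (E.card : ℝ) ^ 2 := by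
        have := EH_norm_le M E k
        gcongr
      have : (dQ Q k : ℝ) * ‖EH M E k‖ ^ 2 ≤ ((dQ Q k : ℝ) ^ 10 / D ^ 9) * (E.card : ℝ) ^ 2 := by
        gcongr
      have h3 : 0 ≤ D * ‖EH M E k‖ ^ 2 := by positivity
      calc _ ≤ _ := this
        _ = (dQ Q k : ℝ) ^ 10 * ((E.card : ℝ) ^ 2 / D ^ 9) := by ring
        _ ≤ _ := by linarith
  refine (Finset.sum_le_sum h1).trans ?_
  rw [Finset.sum_add_distrib, ← Finset.mul_sum, ← Finset.sum_mul]
  have h2 := EH_bessel M hM E hE (N ^ 2) hN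
  have h3 := h Q (N ^ 2) hQ
  have h4 : (∑ i ∈ Finset.Icc 1 (N ^ 2), (dQ Q i : ℝ) ^ 10) * ((E.card : ℝ) ^ 2 / D ^ 9) ≤
     (C * (N ^ 2 : ℕ) * (Q : ℝ) ^ (1 / 8 : ℝ)) * ((E.card : ℝ) ^ 2 / D ^ 9) := by gcongr
  have h5 := mul_le_mul_of_nonneg_left h2 hD.le
  refine (add_le_add h5 h4).trans (le_of_eq ?_)
  push_cast
  ring

/-- The weighted quadratic exponential sum. -/
def GG (M N : ℕ) (g : ℤ → ℝ) (j : ℕ) : ℂ :=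
  ∑ x ∈ Finset.Icc (-(N : ℤ)) N, (g x : ℂ) * ee (j * (((x ^ 2 : ℤ) : ℝ) / M))

lemma theta_hasSum (N : ℕ) (hN : 1 ≤ N) (α : ℝ) :
    HasSum (fun x : ℤ ↦ ((Real.exp (-Real.pi * (x : ℝ) ^ 2 / (N : ℝ) ^ 2) : ℝ) : ℂ) * ee (α * (x : ℝ) ^ 2))
      (jacobiTheta (2 * (α : ℂ) + Complex.I / (N : ℂ) ^ 2)) := by
  have hN0 : (0 : ℝ) < N := by exact_mod_cast hN
  have him : (2 * (α : ℂ) + Complex.I / (N : ℂ) ^ 2) = ((2 * α : ℝ) : ℂ) + ((1 / (N : ℝ) ^ 2 : ℝ) : ℂ) * Complex.I := by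
    push_cast; ring
  have him1 : (2 * (α : ℂ) + Complex.I / (N : ℂ) ^ 2).im = 1 / (N : ℝ) ^ 2 := by
    rw [him, Complex.add_im, Complex.im_ofReal_mul]; simp only [Complex.ofReal_im, Complex.I_im]; ring
  have h := hasSum_jacobiTheta₂_term 0 (τ := 2 * (α : ℂ) + Complex.I / (N : ℂ) ^ 2)
    (by rw [him1]; positivity)
  rw [jacobiTheta_eq_jacobiTheta₂]
  convert h using 2 with x
  rw [jacobiTheta₂_term, ee, Complex.ofReal_exp, ← Complex.exp_add]
  congr 1
  push_cast
  linear_combination (-(Real.pi : ℂ) * (x : ℂ) ^ 2 / (N : ℂ) ^ 2) * Complex.I_sq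

lemma duality (M N : ℕ) (hN : 1 ≤ N) (g : ℤ → ℝ)
    (hg : ∑ x ∈ Finset.Icc (-(N : ℤ)) N, g x ^ 2 ≤ 1) (E : Finset ℕ) (δ : ℝ) (hδ : 0 ≤ δ)
    (hE : ∀ j ∈ E, δ * Real.sqrt N ≤ ‖GG M N g j‖) :
    δ ^ 2 * N * (E.card : ℝ) ^ 2 ≤
      Real.exp Real.pi * ∑ j ∈ E, ∑ j' ∈ E, kap N (((j : ℝ) - j') / M) := by
  have hN0 : (0 : ℝ) < N := by exact_mod_cast hN
  have hc : ∀ j : ℕ, ∃ c : ℂ, ‖c‖ ≤ 1 ∧ c * GG M N g j = (‖GG M N g j‖ : ℂ) := by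
    intro j
    by_cases h : GG M N g j = 0
    · exact ⟨0, by simp, by simp [h]⟩
    · have h0 : (‖GG M N g j‖ : ℂ) ≠ 0 := by simpa using h
      refine ⟨(starRingEnd ℂ) (GG M N g j) / ‖GG M N g j‖, ?_, ?_⟩
      · rw [norm_div, Complex.norm_conj, Complex.norm_real, norm_norm]
        exact div_self_le_one _
      · rw [div_mul_eq_mul_div, Complex.conj_mul', sq, mul_div_assoc, div_self h0, mul_one]
  choose c hc1 hc2 using hc
  set Hx : ℤ → ℂ := fun x ↦ ∑ j ∈ E, c j * ee (j * (((x ^ 2 : ℤ) : ℝ) / M)) with hHx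
  set S := Finset.Icc (-(N : ℤ)) N with hS
  -- step 1
  have h1 : (∑ j ∈ E, ‖GG M N g j‖) ≤ ∑ x ∈ S, |g x| * ‖Hx x‖ := by
    have e : ((∑ j ∈ E, ‖GG M N g j‖ : ℝ) : ℂ) = ∑ x ∈ S, (g x : ℂ) * Hx x := by
      push_cast
      simp_rw [← hc2, GG, hHx, Finset.mul_sum]
      rw [Finset.sum_comm]
      refine Finset.sum_congr rfl (fun x _ ↦ Finset.sum_congr rfl (fun j _ ↦ ?_))
      ring
    have e2 : ‖((∑ j ∈ E, ‖GG M N g j‖ : ℝ) : ℂ)‖ = ∑ j ∈ E, ‖GG M N g j‖ := by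
      rw [Complex.norm_real, Real.norm_of_nonneg (Finset.sum_nonneg (fun _ _ ↦ norm_nonneg _))]
    rw [← e2, e]
    refine (norm_sum_le _ _).trans (le_of_eq ?_)
    simp
  have h2 : δ * Real.sqrt N * E.card ≤ ∑ j ∈ E, ‖GG M N g j‖ := by
    calc _ = ∑ j ∈ E, δ * Real.sqrt N := by simp; ring
      _ ≤ _ := Finset.sum_le_sum hE
  have h3 : δ ^ 2 * N * (E.card : ℝ) ^ 2 ≤ ∑ x ∈ S, ‖Hx x‖ ^ 2 := by
    have cs := Finset.sum_mul_sq_le_sq_mul_sq S (fun x ↦ |g x|) (fun x ↦ ‖Hx x‖)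
    simp only [sq_abs] at cs
    have h4 := h2.trans h1
    have h5 : (δ * Real.sqrt N * E.card) ^ 2 ≤ (∑ x ∈ S, |g x| * ‖Hx x‖) ^ 2 := by gcongr
    have h6 : (δ * Real.sqrt N * E.card) ^ 2 = δ ^ 2 * N * (E.card : ℝ) ^ 2 := by
      rw [mul_pow, mul_pow, Real.sq_sqrt hN0.le]
    rw [← h6]
    refine h5.trans (cs.trans ?_)
    have : 0 ≤ ∑ x ∈ S, ‖Hx x‖ ^ 2 := Finset.sum_nonneg (fun _ _ ↦ by positivity)
    nlinarith
  -- step 2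
  set w : ℤ → ℝ := fun x ↦ Real.exp (-Real.pi * (x : ℝ) ^ 2 / (N : ℝ) ^ 2) with hw
  have h4 : ∑ x ∈ S, ‖Hx x‖ ^ 2 ≤ Real.exp Real.pi * ∑ x ∈ S, w x * ‖Hx x‖ ^ 2 := by
    rw [Finset.mul_sum]
    refine Finset.sum_le_sum (fun x hx ↦ ?_)
    rw [← mul_assoc]
    have : 1 ≤ Real.exp Real.pi * w x := by
      rw [hw, ← Real.exp_add, Real.one_le_exp_iff]
      have hx2 : (x : ℝ) ^ 2 ≤ (N : ℝ) ^ 2 := by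
        rw [hS, Finset.mem_Icc] at hx
        have a1 : -(N : ℝ) ≤ x := by exact_mod_cast hx.1
        have a2 : (x : ℝ) ≤ N := by exact_mod_cast hx.2
        nlinarith
      have : Real.pi * (x : ℝ) ^ 2 / (N : ℝ) ^ 2 ≤ Real.pi := by
        rw [div_le_iff₀ (by positivity)]
        exact mul_le_mul_of_nonneg_left hx2 Real.pi_pos.le
      have e : -Real.pi * (x : ℝ) ^ 2 / (N : ℝ) ^ 2 = -(Real.pi * (x : ℝ) ^ 2 / (N : ℝ) ^ 2) := by ring
      rw [e]; linarith
    exact le_mul_of_one_le_left (by positivity) this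
  have h5 : HasSum (fun x : ℤ ↦ ((w x * ‖Hx x‖ ^ 2 : ℝ) : ℂ)) (∑ j ∈ E, ∑ j' ∈ E,
      c j * (starRingEnd ℂ) (c j') *
        jacobiTheta (2 * ((((j : ℝ) - j') / M : ℝ) : ℂ) + Complex.I / (N : ℂ) ^ 2)) := by
    have : ∀ x : ℤ, ((w x * ‖Hx x‖ ^ 2 : ℝ) : ℂ) = ∑ j ∈ E, ∑ j' ∈ E,
        c j * (starRingEnd ℂ) (c j') * ((w x : ℂ) * ee ((((j : ℝ) - j') / M) * (x : ℝ) ^ 2)) := by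
      intro x
      push_cast
      rw [← Complex.mul_conj', hHx, map_sum, Finset.sum_mul_sum, Finset.mul_sum]
      refine Finset.sum_congr rfl (fun j _ ↦ ?_)
      rw [Finset.mul_sum]
      refine Finset.sum_congr rfl (fun j' _ ↦ ?_)
      rw [map_mul, ee_conj]
      have : ee ((((j : ℝ) - j') / M) * (x : ℝ) ^ 2) = ee (j * (((x ^ 2 : ℤ) : ℝ) / M)) *
          ee (-(j' * (((x ^ 2 : ℤ) : ℝ) / M))) := by
        rw [← ee_add]; congr 1; push_cast; ring
      rw [this]; ring
    simp_rw [this]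
    refine hasSum_sum (fun j _ ↦ hasSum_sum (fun j' _ ↦ ?_))
    exact (theta_hasSum N hN _).mul_left _
  have h6 := Complex.hasSum_re h5
  simp only [Complex.ofReal_re] at h6
  have h7 := sum_le_hasSum S (fun x _ ↦ by positivity) h6
  have h8 := h7.trans ((Complex.re_le_norm _).trans (norm_sum_le _ _))
  refine h3.trans (h4.trans ?_)
  refine mul_le_mul_of_nonneg_left (h8.trans ?_) (Real.exp_pos _).le
  refine Finset.sum_le_sum (fun j _ ↦ (norm_sum_le _ _).trans ?_)
  refine Finset.sum_le_sum (fun j' _ ↦ ?_)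
  rw [norm_mul, norm_mul, Complex.norm_conj]
  have : ‖c j‖ * ‖c j'‖ ≤ 1 := mul_le_one₀ (hc1 j) (norm_nonneg _) (hc1 j')
  exact mul_le_of_le_one_left (norm_nonneg _) this

lemma level_alg (A B C0 C1 D0 t n Mm e Sg : ℝ) (hA : 1 ≤ A) (hB1 : 1 ≤ B) (hC0 : 1 ≤ C0)
    (hC1 : 1 ≤ C1) (ht : 1 ≤ t) (hn : 1 ≤ n) (hM : 0 ≤ Mm) (he : 0 ≤ e)
    (h : e ^ 2 / t ^ 4 ≤ A * (C0 / (B * t ^ 4) * e ^ 2 + 512 * (B * t ^ 4) / n ^ 2 *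
      (8 * (B * t ^ 4) ^ 2 * e ^ 2 + Sg)))
    (hS : Sg ≤ D0 * t * (Mm * e) + C1 * n ^ 2 * (2 * B * t) / (D0 * t) ^ 9 * e ^ 2)
    (hB : 4 * A * C0 ≤ B) (hn2 : 16384 * A * B ^ 3 * t ^ 16 ≤ n ^ 2)
    (hD0 : D0 = 4096 * A * B ^ 2 * C1) :
    e * n ^ 2 ≤ 2048 * A * B * D0 * t ^ 9 * Mm := by
  have hB2 : 1 ≤ B ^ 2 := one_le_pow₀ hB1
  have hD1 : 1 ≤ D0 := by
    rw [hD0]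
    have : 1 ≤ A * B ^ 2 := one_le_mul_of_one_le_of_one_le hA hB2
    have : 1 ≤ A * B ^ 2 * C1 := one_le_mul_of_one_le_of_one_le this hC1
    nlinarith
  have k1 : A * (C0 / (B * t ^ 4) * e ^ 2) ≤ e ^ 2 / t ^ 4 / 4 := by
    have : A * (C0 / (B * t ^ 4) * e ^ 2) = (A * C0 / B) * (e ^ 2 / t ^ 4) := by field_simp
    rw [this]
    have h1 : A * C0 / B ≤ 1 / 4 := by rw [div_le_iff₀ (by positivity)]; linarith
    have := mul_le_mul_of_nonneg_right h1 (by positivity : 0 ≤ e ^ 2 / t ^ 4)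
    linarith
  have k2 : A * (512 * (B * t ^ 4) / n ^ 2 * (8 * (B * t ^ 4) ^ 2 * e ^ 2)) ≤ e ^ 2 / t ^ 4 / 4 := by
    have : A * (512 * (B * t ^ 4) / n ^ 2 * (8 * (B * t ^ 4) ^ 2 * e ^ 2)) =
      (16384 * A * B ^ 3 * t ^ 16 / n ^ 2) * (e ^ 2 / t ^ 4 / 4) := by field_simp; ring
    rw [this]
    exact mul_le_of_le_one_left (by positivity) ((div_le_one (by positivity)).2 hn2)
  have k3 : A * (512 * (B * t ^ 4) / n ^ 2 * Sg) ≤ A * (512 * (B * t ^ 4) / n ^ 2 *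
      (D0 * t * (Mm * e) + C1 * n ^ 2 * (2 * B * t) / (D0 * t) ^ 9 * e ^ 2)) := by gcongr
  have k4 : A * (512 * (B * t ^ 4) / n ^ 2 * (C1 * n ^ 2 * (2 * B * t) / (D0 * t) ^ 9 * e ^ 2)) ≤
      e ^ 2 / t ^ 4 / 4 := by
    have : A * (512 * (B * t ^ 4) / n ^ 2 * (C1 * n ^ 2 * (2 * B * t) / (D0 * t) ^ 9 * e ^ 2)) =
        ((4096 * A * B ^ 2 * C1) / D0 ^ 9) * (e ^ 2 / t ^ 4 / 4) := by field_simp; ring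
    rw [this, ← hD0]
    refine mul_le_of_le_one_left (by positivity) ((div_le_one (by positivity)).2 ?_)
    exact le_self_pow₀ hD1 (by norm_num)
  have k5 : e ^ 2 / t ^ 4 / 4 ≤ A * (512 * (B * t ^ 4) / n ^ 2 * (D0 * t * (Mm * e))) := by
    have e1 : ∀ x y z w : ℝ, A * (x + z * (y + w)) = A * x + A * (z * y) + A * (z * w) := by
      intros; ring
    have e2 : ∀ x y z : ℝ, A * (z * (x + y)) = A * (z * x) + A * (z * y) := by intros; ring
    rw [e1] at h
    rw [e2] at k3
    linarith
  have k6 : e * (e * n ^ 2) ≤ e * (2048 * A * B * D0 * t ^ 9 * Mm) := by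
    have h1 : e * (e * n ^ 2) = (e ^ 2 / t ^ 4 / 4) * (4 * t ^ 4 * n ^ 2) := by field_simp
    have h2 : e * (2048 * A * B * D0 * t ^ 9 * Mm) =
      (A * (512 * (B * t ^ 4) / n ^ 2 * (D0 * t * (Mm * e)))) * (4 * t ^ 4 * n ^ 2) := by
      field_simp; ring
    rw [h1, h2]
    gcongr
  rcases he.eq_or_lt with h0 | h0
  · rw [← h0, zero_mul]; positivity
  · exact le_of_mul_le_mul_left k6 h0

open Classical in
lemma dyadic_le (C0 v : ℝ) (hC0 : 0 ≤ C0) (hv : v ≤ C0) (I : ℕ) :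
    v ≤ C0 / 2 ^ I + ∑ i ∈ Finset.range I, (C0 / 2 ^ i) * (if C0 / 2 ^ (i + 1) ≤ v then 1 else 0) := by
  induction I with
  | zero => simpa using hv
  | succ I ih =>
    rw [Finset.sum_range_succ]
    have hnn : 0 ≤ ∑ i ∈ Finset.range I, (C0 / 2 ^ i) * (if C0 / 2 ^ (i + 1) ≤ v then (1:ℝ) else 0) :=
      Finset.sum_nonneg (fun i _ ↦ by split_ifs <;> positivity)
    split_ifs with h
    · have : 0 ≤ C0 / 2 ^ (I + 1) := by positivity
      linarith
    · push Not at h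
      linarith

set_option maxHeartbeats 1000000 in
open Classical in
lemma level_large : ∃ C : ℝ, 1 ≤ C ∧ ∀ (m N M : ℕ) (g : ℤ → ℝ) (E : Finset ℕ), 1 ≤ N → N ^ 2 ≤ M →
    ∑ x ∈ Finset.Icc (-(N : ℤ)) N, g x ^ 2 ≤ 1 → E ⊆ Finset.range M →
    (∀ j ∈ E, 1 / 4 ^ m * Real.sqrt N ≤ ‖GG M N g j‖) → C * 2 ^ (8 * m) ≤ (N : ℝ) →
    (E.card : ℝ) * N ^ 2 ≤ C * 2 ^ (9 * m) * M := by
  obtain ⟨C0, hC0, H⟩ := theta_weyl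
  obtain ⟨C1, hC1, hdq⟩ := dQ_sum_bound
  set A := Real.exp Real.pi with hAdef
  have hA : 1 ≤ A := Real.one_le_exp Real.pi_pos.le
  obtain ⟨a, ha⟩ := pow_unbounded_of_one_lt (4 * A * C0) (one_lt_two)
  set B : ℝ := 2 ^ a with hBdef
  have hB1 : 1 ≤ B := one_le_pow₀ one_le_two
  have hB2 : 1 ≤ B ^ 2 := one_le_pow₀ hB1
  have hB3 : 1 ≤ B ^ 3 := one_le_pow₀ hB1
  set D0 := 4096 * A * B ^ 2 * C1 with hD0
  have hD1 : 1 ≤ D0 := by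
    rw [hD0]
    have : 1 ≤ A * B ^ 2 := one_le_mul_of_one_le_of_one_le hA hB2
    have : 1 ≤ A * B ^ 2 * C1 := one_le_mul_of_one_le_of_one_le this hC1
    nlinarith
  set Cf := 16384 * A * B ^ 3 * D0 with hCf
  have hCA : 16384 * A * B ^ 3 ≤ Cf := le_mul_of_one_le_right (by positivity) hD1
  have hAB : 1 ≤ A * B ^ 3 := one_le_mul_of_one_le_of_one_le hA hB3
  have hCf1 : 1 ≤ Cf := le_trans (by nlinarith) hCA
  refine ⟨Cf, hCf1, ?_⟩
  intro m N M g E hN hNM hg hE hlev hNbig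
  have hN0 : (1 : ℝ) ≤ N := by exact_mod_cast hN
  have hM1 : 1 ≤ M := le_trans (Nat.one_le_pow _ _ hN) hNM
  set t : ℝ := 2 ^ m with ht
  have ht1 : 1 ≤ t := one_le_pow₀ one_le_two
  have e8 : (2 : ℝ) ^ (8 * m) = t ^ 8 := by rw [ht, ← pow_mul, mul_comm]
  have e9 : (2 : ℝ) ^ (9 * m) = t ^ 9 := by rw [ht, ← pow_mul, mul_comm]
  rw [e8] at hNbig
  rw [e9]
  set e : ℝ := (E.card : ℝ) with he
  have hn2 : 16384 * A * B ^ 3 * t ^ 16 ≤ (N : ℝ) ^ 2 := by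
    have h1 : (Cf * t ^ 8) ^ 2 ≤ (N : ℝ) ^ 2 := by gcongr
    refine le_trans ?_ h1
    calc 16384 * A * B ^ 3 * t ^ 16 ≤ Cf * t ^ 16 := by gcongr
      _ ≤ Cf ^ 2 * t ^ 16 := by gcongr; exact le_self_pow₀ hCf1 (by norm_num)
      _ = _ := by ring
  set I := 4 * m + a with hI
  have hI2 : (2 : ℝ) ^ I = B * t ^ 4 := by rw [hI, pow_add, ht, hBdef, ← pow_mul]; ring
  have hI4 : (4 : ℝ) ^ I = (B * t ^ 4) ^ 2 := by rw [← hI2, ← pow_mul, mul_comm, pow_mul]; norm_num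
  set Q' : ℕ := 2 * 4 ^ I with hQ'
  have hQ'1 : 1 ≤ Q' := by rw [hQ']; have := Nat.one_le_pow I 4 (by norm_num); omega
  set Sg := ∑ k ∈ Finset.Icc 1 (N ^ 2), dQ Q' k * ‖EH M E k‖ ^ 2 with hSg
  have hSg0 : 0 ≤ Sg := Finset.sum_nonneg (fun _ _ ↦ by positivity)
  have hS : Sg ≤ D0 * t * (M * e) + C1 * N ^ 2 * (2 * B * t) / (D0 * t) ^ 9 * e ^ 2 := by
    refine (hdq M N Q' E (D0 * t) hM1 hNM hQ'1 hE (by positivity)).trans ?_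
    have : (Q' : ℝ) ^ (1 / 8 : ℝ) ≤ 2 * B * t := by
      have h1 : (Q' : ℝ) ≤ (2 * B * t) ^ 8 := by
        rw [hQ']; push_cast; rw [hI4]
        have : B ^ 2 ≤ B ^ 8 := pow_le_pow_right₀ hB1 (by norm_num)
        calc 2 * (B * t ^ 4) ^ 2 = 2 * B ^ 2 * t ^ 8 := by ring
          _ ≤ 256 * B ^ 8 * t ^ 8 := by gcongr; norm_num
          _ = _ := by ring
      calc (Q' : ℝ) ^ (1 / 8 : ℝ) ≤ ((2 * B * t) ^ 8) ^ (1 / 8 : ℝ) := by gcongr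
        _ = 2 * B * t := by
          rw [← Real.rpow_natCast, ← Real.rpow_mul (by positivity)]; norm_num
    gcongr
  refine (level_alg A B C0 C1 D0 t N M e Sg hA hB1 hC0 hC1 ht1 hN0 (by positivity) (by positivity)
    ?_ hS ha.le hn2 hD0).trans ?_
  swap
  · have : 2048 * A * B * D0 ≤ Cf := by
      rw [hCf]
      have : B ≤ B ^ 3 := le_self_pow₀ hB1 (by norm_num)
      gcongr
      norm_num
    gcongr
  have hd := duality M N hN g hg E (1 / 4 ^ m) (by positivity) hlev
  have h4m : (1 / 4 ^ m : ℝ) ^ 2 = 1 / t ^ 4 := by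
    rw [div_pow, one_pow, ht, ← pow_mul, ← pow_mul]
    congr 1
    rw [show (4 : ℝ) = 2 ^ 2 by norm_num, ← pow_mul]; congr 1; ring
  rw [h4m, ← Finset.sum_product'] at hd
  -- the dyadic decomposition
  have hpt : ∀ p ∈ E ×ˢ E, kap N (((p.1 : ℝ) - p.2) / M) / N ≤ C0 / 2 ^ I +
      ∑ i ∈ Finset.range I, (C0 / 2 ^ i) *
        (if C0 / 2 ^ (i + 1) * N ≤ kap N (((p.1 : ℝ) - p.2) / M) then 1 else 0) := by
    intro p _
    have h1 : kap N (((p.1 : ℝ) - p.2) / M) / N ≤ C0 := by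
      rw [div_le_iff₀ (by positivity)]
      exact kap_le C0 hC0 H N hN _
    have := dyadic_le C0 _ (by linarith) h1 I
    simp_rw [le_div_iff₀ (show (0:ℝ) < N by linarith)] at this
    exact this
  have hsum := Finset.sum_le_sum hpt
  rw [← Finset.sum_div, Finset.sum_add_distrib, Finset.sum_comm] at hsum
  have hcount : ∀ i ∈ Finset.range I, ∑ p ∈ E ×ˢ E, (C0 / 2 ^ i) *
        (if C0 / 2 ^ (i + 1) * N ≤ kap N (((p.1 : ℝ) - p.2) / M) then (1 : ℝ) else 0) ≤
      2 ^ i * (512 / N ^ 2 * (8 * (B * t ^ 4) ^ 2 * e ^ 2 + Sg)) := by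
    intro i hi
    rw [Finset.mem_range] at hi
    rw [← Finset.mul_sum, ← Finset.sum_filter, Finset.sum_const, nsmul_eq_mul, mul_one]
    have hs0 : 0 < C0 / 2 ^ (i + 1) := by positivity
    have hiI : (2 : ℝ) ^ (i + 1) ≤ B * t ^ 4 := by
      rw [← hI2]; exact pow_le_pow_right₀ one_le_two hi
    have e2c : 2 * C0 / (C0 / 2 ^ (i + 1)) ^ 2 ≤ 2 * (B * t ^ 4) ^ 2 := by
      have : 2 * C0 / (C0 / 2 ^ (i + 1)) ^ 2 = 2 * (2 ^ (i + 1)) ^ 2 / C0 := by field_simp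
      rw [this]
      refine (div_le_self (by positivity) hC0).trans ?_
      gcongr
    have hkp := kap_pairs C0 hC0 H N hN M E (C0 / 2 ^ (i + 1)) hs0 ?_ Q' ?_
    · calc _ ≤ C0 / 2 ^ i * _ := mul_le_mul_of_nonneg_left hkp (by positivity)
        _ = 2 ^ i * (512 / N ^ 2 * (2 * C0 / (C0 / 2 ^ (i + 1)) ^ 2 * e ^ 2 + Sg)) := by
            rw [← hSg, ← he, pow_succ]; field_simp; ring
        _ ≤ _ := by
            gcongr
            refine e2c.trans ?_
            gcongr
            norm_num
    · have : 8 * B ^ 2 * t ^ 8 ≤ (N : ℝ) ^ 2 := by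
        refine le_trans ?_ hn2
        have h1 : B ^ 2 ≤ A * B ^ 3 := by nlinarith [pow_le_pow_right₀ hB1 (show 2 ≤ 3 by norm_num)]
        have h2 : t ^ 8 ≤ t ^ 16 := pow_le_pow_right₀ ht1 (by norm_num)
        calc 8 * B ^ 2 * t ^ 8 ≤ 16384 * (A * B ^ 3) * t ^ 16 := by gcongr; norm_num
          _ = _ := by ring
      rw [div_pow, div_mul_eq_mul_div, le_div_iff₀ (by positivity)]
      have h3 : ((2 : ℝ) ^ (i + 1)) ^ 2 ≤ (B * t ^ 4) ^ 2 := by gcongr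
      calc 8 * C0 * ((2 : ℝ) ^ (i + 1)) ^ 2 ≤ 8 * C0 * (B * t ^ 4) ^ 2 := by gcongr
        _ = C0 * (8 * B ^ 2 * t ^ 8) := by ring
        _ ≤ C0 * N ^ 2 := by gcongr
        _ ≤ C0 ^ 2 * N ^ 2 := by gcongr; exact le_self_pow₀ hC0 (by norm_num)
    · refine e2c.trans ?_
      rw [hQ']; push_cast; rw [hI4]
  have hsum2 := hsum.trans (add_le_add_right (Finset.sum_le_sum hcount) _)
  rw [← Finset.sum_mul, Finset.sum_const, Finset.card_product, nsmul_eq_mul] at hsum2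
  have hgeo : ∑ i ∈ Finset.range I, (2 : ℝ) ^ i ≤ B * t ^ 4 := by
    rw [← hI2, geom_sum_eq (by norm_num)]
    norm_num
  have hfin : (∑ p ∈ E ×ˢ E, kap N (((p.1 : ℝ) - p.2) / M)) / N ≤
      C0 / (B * t ^ 4) * e ^ 2 + 512 * (B * t ^ 4) / N ^ 2 * (8 * (B * t ^ 4) ^ 2 * e ^ 2 + Sg) := by
    refine hsum2.trans ?_
    push_cast
    rw [hI2]
    have : (∑ i ∈ Finset.range I, (2 : ℝ) ^ i) * (512 / N ^ 2 * (8 * (B * t ^ 4) ^ 2 * e ^ 2 + Sg)) ≤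
      (B * t ^ 4) * (512 / N ^ 2 * (8 * (B * t ^ 4) ^ 2 * e ^ 2 + Sg)) := by gcongr
    refine (add_le_add_right this _).trans (le_of_eq ?_)
    rw [← he]; ring
  have : e ^ 2 / t ^ 4 ≤ A * ((∑ p ∈ E ×ˢ E, kap N (((p.1 : ℝ) - p.2) / M)) / N) := by
    rw [mul_div_assoc', le_div_iff₀ (by linarith)]
    refine le_trans (le_of_eq ?_) hd
    ring
  refine this.trans ?_
  gcongr

lemma parseval (M : ℕ) (hM : 1 ≤ M) (K : Finset ℤ) (a : ℤ → ℝ)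
    (hK : ∀ k ∈ K, ∀ k' ∈ K, |k - k'| < M) :
    ∑ j ∈ Finset.range M, ‖∑ k ∈ K, (a k : ℂ) * ee (j * ((k : ℝ) / M))‖ ^ 2 = M * ∑ k ∈ K, a k ^ 2 := by
  have : ((∑ j ∈ Finset.range M, ‖∑ k ∈ K, (a k : ℂ) * ee (j * ((k : ℝ) / M))‖ ^ 2 : ℝ) : ℂ) =
      ((M * ∑ k ∈ K, a k ^ 2 : ℝ) : ℂ) := by
    push_cast
    have h1 : ∀ j : ℕ, (‖∑ k ∈ K, (a k : ℂ) * ee (j * ((k : ℝ) / M))‖ : ℂ) ^ 2 =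
        ∑ k ∈ K, ∑ k' ∈ K, (a k : ℂ) * a k' * ee (j * (((k - k' : ℤ) : ℝ) / M)) := by
      intro j
      rw [← Complex.mul_conj', map_sum, Finset.sum_mul_sum]
      refine Finset.sum_congr rfl (fun k _ ↦ Finset.sum_congr rfl (fun k' _ ↦ ?_))
      rw [map_mul, ee_conj, Complex.conj_ofReal]
      have : ee (j * (((k - k' : ℤ) : ℝ) / M)) = ee (j * ((k : ℝ) / M)) * ee (-(j * ((k' : ℝ) / M))) := by
        rw [← ee_add]; congr 1; push_cast; ring
      rw [this]; ring
    simp_rw [h1]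
    rw [Finset.sum_comm, Finset.mul_sum]
    refine Finset.sum_congr rfl (fun k hk ↦ ?_)
    rw [Finset.sum_comm, Finset.sum_eq_single_of_mem k hk]
    · rw [← Finset.mul_sum, ee_orth M hM]; simp; ring
    · intro k' hk' hne
      rw [← Finset.mul_sum, ee_orth M hM, if_neg, mul_zero]
      intro h
      have := Int.eq_zero_of_abs_lt_dvd h (hK k hk k' hk')
      omega
  exact_mod_cast this

lemma diff_sq_count (N : ℕ) (k : ℤ) (hk : k ≠ 0) :
    (((Finset.Icc (-(N : ℤ)) N) ×ˢ (Finset.Icc (-(N : ℤ)) N)).filter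
      (fun p : ℤ × ℤ ↦ p.1 ^ 2 - p.2 ^ 2 = k)).card ≤ 2 * k.natAbs.divisors.card := by
  have : 2 * k.natAbs.divisors.card = ((Finset.univ : Finset Bool) ×ˢ k.natAbs.divisors).card := by
    simp [Finset.card_product]
  rw [this]
  refine Finset.card_le_card_of_injOn
    (fun p : ℤ × ℤ ↦ (decide (0 < p.1 - p.2), (p.1 - p.2).natAbs)) ?_ ?_
  · intro p hp
    have hp2 := (Finset.mem_filter.1 hp).2
    simp only [Finset.coe_product, Set.mem_prod, Finset.mem_coe, Finset.mem_univ, true_and,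
      Nat.mem_divisors]
    refine ⟨?_, by simpa using hk⟩
    rw [Int.natAbs_dvd_natAbs]
    exact ⟨p.1 + p.2, by rw [← hp2]; ring⟩
  · intro p hp p' hp' h
    have hp2 := (Finset.mem_filter.1 hp).2
    have hp2' := (Finset.mem_filter.1 hp').2
    simp only [Prod.mk.injEq, decide_eq_decide] at h
    obtain ⟨h1, h2⟩ := h
    have hd : p.1 - p.2 = p'.1 - p'.2 := by omega
    have hne : p.1 - p.2 ≠ 0 := by
      intro h0
      apply hk
      rw [← hp2, sq_sub_sq, h0, mul_zero]
    have hs : p.1 + p.2 = p'.1 + p'.2 := by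
      apply mul_right_cancel₀ hne
      rw [← sq_sub_sq, hp2, hd, ← sq_sub_sq, hp2']
    ext <;> omega

lemma fourth_moment : ∃ C : ℝ, 1 ≤ C ∧ ∀ (N M : ℕ) (g : ℤ → ℝ), 1 ≤ N → 2 * N ^ 2 < M →
    ∑ x ∈ Finset.Icc (-(N : ℤ)) N, g x ^ 2 ≤ 1 →
    ∑ j ∈ Finset.range M, ‖GG M N g j‖ ^ 4 ≤ C * (N : ℝ) ^ (1 / 8 : ℝ) * M := by
  obtain ⟨C, hC, hdiv⟩ := divisor_bound (1 / 16) (by norm_num)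
  refine ⟨2 * C + 4, by linarith, fun N M g hN hM hg ↦ ?_⟩
  have hN0 : (1 : ℝ) ≤ N := by exact_mod_cast hN
  have hN8 : 1 ≤ (N : ℝ) ^ (1 / 8 : ℝ) := Real.one_le_rpow hN0 (by norm_num)
  set S := Finset.Icc (-(N : ℤ)) N with hS
  set K := Finset.Icc (-(N : ℤ) ^ 2) (N ^ 2) with hK
  set P : ℤ → Finset (ℤ × ℤ) := fun k ↦ (S ×ˢ S).filter (fun p : ℤ × ℤ ↦ p.1 ^ 2 - p.2 ^ 2 = k) with hP
  set a : ℤ → ℝ := fun k ↦ ∑ p ∈ P k, g p.1 * g p.2 with ha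
  have hSN : ∀ x ∈ S, x ^ 2 ≤ (N : ℤ) ^ 2 := by
    intro x hx
    rw [hS, Finset.mem_Icc] at hx
    nlinarith
  have hmap : ∀ p ∈ S ×ˢ S, p.1 ^ 2 - p.2 ^ 2 ∈ K := by
    intro p hp
    rw [Finset.mem_product] at hp
    have h1 := hSN _ hp.1
    have h2 := hSN _ hp.2
    rw [hK, Finset.mem_Icc]
    constructor <;> nlinarith [sq_nonneg p.1, sq_nonneg p.2]
  have h1 : ∀ j : ℕ, ((‖GG M N g j‖ ^ 2 : ℝ) : ℂ) = ∑ k ∈ K, (a k : ℂ) * ee (j * ((k : ℝ) / M)) := by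
    intro j
    push_cast
    rw [← Complex.mul_conj', GG, map_sum, Finset.sum_mul_sum, ← Finset.sum_product',
      ← Finset.sum_fiberwise_of_maps_to hmap]
    refine Finset.sum_congr rfl (fun k _ ↦ ?_)
    simp only [ha, hP]
    push_cast
    rw [Finset.sum_mul]
    refine Finset.sum_congr rfl (fun p hp ↦ ?_)
    rw [map_mul, ee_conj, Complex.conj_ofReal, ← (Finset.mem_filter.1 hp).2]
    have : ee (j * (((p.1 ^ 2 - p.2 ^ 2 : ℤ) : ℝ) / M)) = ee (j * (((p.1 ^ 2 : ℤ) : ℝ) / M)) *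
        ee (-(j * (((p.2 ^ 2 : ℤ) : ℝ) / M))) := by
      rw [← ee_add]; congr 1; push_cast; ring
    rw [this]; push_cast; ring
  have h2 : ∑ j ∈ Finset.range M, ‖GG M N g j‖ ^ 4 = M * ∑ k ∈ K, a k ^ 2 := by
    rw [← parseval M (by omega) K a]
    · refine Finset.sum_congr rfl (fun j _ ↦ ?_)
      rw [← h1, Complex.norm_real, norm_pow, norm_norm]; ring
    · intro k hk k' hk'
      rw [hK, Finset.mem_Icc] at hk hk'
      have : 2 * (N : ℤ) ^ 2 < M := by exact_mod_cast hM
      rw [abs_lt]; constructor <;> linarith [hk.1, hk.2, hk'.1, hk'.2]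
  -- total mass
  have hmass : ∑ k ∈ K, ∑ p ∈ P k, g p.1 ^ 2 * g p.2 ^ 2 ≤ 1 := by
    rw [Finset.sum_fiberwise_of_maps_to hmap, Finset.sum_product]
    simp only
    rw [← Finset.sum_mul_sum]
    have : 0 ≤ ∑ x ∈ S, g x ^ 2 := Finset.sum_nonneg (fun _ _ ↦ sq_nonneg _)
    exact mul_le_one₀ hg this hg
  have h3 : ∀ k ∈ K, k ≠ 0 → a k ^ 2 ≤ (2 * C * (N : ℝ) ^ (1 / 8 : ℝ)) *
      ∑ p ∈ P k, g p.1 ^ 2 * g p.2 ^ 2 := by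
    intro k hk hk0
    have cs := sq_sum_le_card_mul_sum_sq (s := P k) (f := fun p ↦ g p.1 * g p.2)
    refine cs.trans ?_
    simp_rw [mul_pow]
    refine mul_le_mul_of_nonneg_right ?_ (Finset.sum_nonneg (fun _ _ ↦ by positivity))
    have c1 := diff_sq_count N k hk0
    have c2 := hdiv k.natAbs (Int.natAbs_pos.2 hk0)
    have c3 : (k.natAbs : ℝ) ≤ (N : ℝ) ^ 2 := by
      rw [hK, Finset.mem_Icc] at hk
      have : k.natAbs ≤ N ^ 2 := by zify; rw [abs_le]; exact ⟨by linarith [hk.1], hk.2⟩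
      exact_mod_cast this
    have c4 : (k.natAbs : ℝ) ^ (1 / 16 : ℝ) ≤ (N : ℝ) ^ (1 / 8 : ℝ) := by
      calc (k.natAbs : ℝ) ^ (1 / 16 : ℝ) ≤ ((N : ℝ) ^ 2) ^ (1 / 16 : ℝ) := by gcongr
        _ = _ := by rw [← Real.rpow_natCast, ← Real.rpow_mul (by positivity)]; norm_num
    have c5 : ((P k).card : ℝ) ≤ 2 * k.natAbs.divisors.card := by exact_mod_cast c1
    calc ((P k).card : ℝ) ≤ 2 * k.natAbs.divisors.card := c5
      _ ≤ 2 * (C * (k.natAbs : ℝ) ^ (1 / 16 : ℝ)) := by linarith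
      _ ≤ 2 * (C * (N : ℝ) ^ (1 / 8 : ℝ)) := by gcongr
      _ = _ := by ring
  have h4 : |a 0| ≤ 2 := by
    have b1 : ∀ x ∈ S, ((S.filter (fun y ↦ x ^ 2 - y ^ 2 = 0)).card : ℝ) ≤ 2 := by
      intro x _
      have : (S.filter (fun y ↦ x ^ 2 - y ^ 2 = 0)) ⊆ {x, -x} := by
        intro y hy
        have := (Finset.mem_filter.1 hy).2
        rw [sub_eq_zero, sq_eq_sq_iff_eq_or_eq_neg] at this
        simp only [Finset.mem_insert, Finset.mem_singleton]
        omega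
      exact_mod_cast (Finset.card_le_card this).trans Finset.card_le_two
    have b2 : |a 0| ≤ ∑ p ∈ P 0, (g p.1 ^ 2 / 2 + g p.2 ^ 2 / 2) := by
      refine (Finset.abs_sum_le_sum_abs _ _).trans (Finset.sum_le_sum (fun p _ ↦ ?_))
      rw [abs_le]
      constructor <;> nlinarith [sq_nonneg (g p.1 + g p.2), sq_nonneg (g p.1 - g p.2)]
    rw [Finset.sum_add_distrib] at b2
    have b3 : ∑ p ∈ P 0, g p.1 ^ 2 / 2 ≤ 1 := by
      simp only [hP]
      rw [Finset.sum_filter, Finset.sum_product]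
      simp_rw [← Finset.sum_filter, Finset.sum_const, nsmul_eq_mul]
      calc _ ≤ ∑ x ∈ S, 2 * (g x ^ 2 / 2) := Finset.sum_le_sum (fun x hx ↦
            mul_le_mul_of_nonneg_right (b1 x hx) (by positivity))
        _ = ∑ x ∈ S, g x ^ 2 := Finset.sum_congr rfl (fun _ _ ↦ by ring)
        _ ≤ 1 := hg
    have b4 : ∑ p ∈ P 0, g p.2 ^ 2 / 2 = ∑ p ∈ P 0, g p.1 ^ 2 / 2 := by
      simp only [hP]
      rw [Finset.sum_filter, Finset.sum_product, Finset.sum_comm, Finset.sum_filter, Finset.sum_product]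
      refine Finset.sum_congr rfl (fun x _ ↦ Finset.sum_congr rfl (fun y _ ↦ ?_))
      have : (y ^ 2 - x ^ 2 = 0) ↔ (x ^ 2 - y ^ 2 = 0) := by constructor <;> intro h <;> linarith
      simp only [this]
    linarith
  have h5 : ∀ k ∈ K, a k ^ 2 ≤ (2 * C * (N : ℝ) ^ (1 / 8 : ℝ)) *
      ∑ p ∈ P k, g p.1 ^ 2 * g p.2 ^ 2 + if k = 0 then 4 else 0 := by
    intro k hk
    split_ifs with h0
    · have : 0 ≤ (2 * C * (N : ℝ) ^ (1 / 8 : ℝ)) * ∑ p ∈ P k, g p.1 ^ 2 * g p.2 ^ 2 :=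
        mul_nonneg (by positivity) (Finset.sum_nonneg (fun _ _ ↦ by positivity))
      rw [h0] at this ⊢
      have : a 0 ^ 2 ≤ 4 := by rw [← sq_abs]; nlinarith [abs_nonneg (a 0)]
      linarith
    · have := h3 k hk h0
      linarith
  have h6 : ∑ k ∈ K, a k ^ 2 ≤ (2 * C + 4) * (N : ℝ) ^ (1 / 8 : ℝ) := by
    refine (Finset.sum_le_sum h5).trans ?_
    rw [Finset.sum_add_distrib, ← Finset.mul_sum]
    have e1 : ∑ k ∈ K, (if k = 0 then (4 : ℝ) else 0) ≤ 4 := by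
      rw [Finset.sum_ite_eq']; split_ifs <;> norm_num
    have e2 := mul_le_mul_of_nonneg_left hmass (by positivity : 0 ≤ 2 * C * (N : ℝ) ^ (1 / 8 : ℝ))
    linarith
  rw [h2]
  have := mul_le_mul_of_nonneg_left h6 (by positivity : (0 : ℝ) ≤ M)
  linarith

/-- The level set estimate. -/
lemma level_set : ∃ C : ℝ, 1 ≤ C ∧ ∀ (m N M : ℕ) (g : ℤ → ℝ) (E : Finset ℕ), 1 ≤ N → 2 * N ^ 2 < M →
    ∑ x ∈ Finset.Icc (-(N : ℤ)) N, g x ^ 2 ≤ 1 → E ⊆ Finset.range M →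
    (∀ j ∈ E, 1 / 4 ^ m * Real.sqrt N ≤ ‖GG M N g j‖) →
    (E.card : ℝ) * N ^ 2 ≤ C * 2 ^ (9 * m) * M := by
  obtain ⟨C1, hC1, h1⟩ := level_large
  obtain ⟨C2, hC2, h2⟩ := fourth_moment
  refine ⟨C1 * C2, one_le_mul_of_one_le_of_one_le hC1 hC2, fun m N M g E hN hM hg hE hlev ↦ ?_⟩
  have hN0 : (1 : ℝ) ≤ N := by exact_mod_cast hN
  by_cases hbig : C1 * 2 ^ (8 * m) ≤ (N : ℝ)
  · refine (h1 m N M g E hN (by nlinarith) hg hE hlev hbig).trans ?_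
    gcongr
    exact le_mul_of_one_le_right (by linarith) hC2
  · push Not at hbig
    have h3 := h2 N M g hN hM hg
    have h4 : (E.card : ℝ) * (1 / 2 ^ (8 * m) * N ^ 2) ≤ ∑ j ∈ Finset.range M, ‖GG M N g j‖ ^ 4 := by
      calc _ = ∑ j ∈ E, (1 / 4 ^ m * Real.sqrt N) ^ 4 := by
            rw [Finset.sum_const, nsmul_eq_mul]
            congr 1
            rw [mul_pow, show Real.sqrt N ^ 4 = (Real.sqrt N ^ 2) ^ 2 by ring,
              Real.sq_sqrt (by linarith), div_pow, one_pow, ← pow_mul]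
            congr 2
            rw [show (4 : ℝ) = 2 ^ 2 by norm_num, ← pow_mul]; congr 1; ring
        _ ≤ ∑ j ∈ E, ‖GG M N g j‖ ^ 4 := Finset.sum_le_sum (fun j hj ↦ by
            have := hlev j hj
            gcongr)
        _ ≤ _ := Finset.sum_le_sum_of_subset_of_nonneg hE (fun _ _ _ ↦ by positivity)
    have h5 : (N : ℝ) ^ (1 / 8 : ℝ) ≤ C1 * 2 ^ m := by
      have : (N : ℝ) ≤ (C1 * 2 ^ m) ^ 8 := by
        refine hbig.le.trans ?_
        rw [mul_pow, ← pow_mul, mul_comm m 8]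
        gcongr
        exact le_self_pow₀ hC1 (by norm_num)
      calc (N : ℝ) ^ (1 / 8 : ℝ) ≤ ((C1 * 2 ^ m) ^ 8) ^ (1 / 8 : ℝ) := by gcongr
        _ = C1 * 2 ^ m := by
          rw [← Real.rpow_natCast, ← Real.rpow_mul (by positivity)]; norm_num
    have h6 : (E.card : ℝ) * (1 / 2 ^ (8 * m) * N ^ 2) ≤ C2 * (C1 * 2 ^ m) * M := by
      refine h4.trans (h3.trans ?_)
      gcongr
    have h7 := mul_le_mul_of_nonneg_right h6 (by positivity : (0 : ℝ) ≤ 2 ^ (8 * m))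
    calc (E.card : ℝ) * N ^ 2 = (E.card : ℝ) * (1 / 2 ^ (8 * m) * N ^ 2) * 2 ^ (8 * m) := by field_simp
      _ ≤ _ := h7
      _ = _ := by rw [show 9 * m = m + 8 * m by ring, pow_add]; ring

/-! ### Part 5: moments and the multilinear estimate -/

lemma GG_norm_le (M N : ℕ) (hN : 1 ≤ N) (g : ℤ → ℝ)
    (hg : ∑ x ∈ Finset.Icc (-(N : ℤ)) N, g x ^ 2 ≤ 1) (j : ℕ) :
    ‖GG M N g j‖ / Real.sqrt N ≤ 2 := by
  have hN0 : (1 : ℝ) ≤ N := by exact_mod_cast hN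
  have h1 : ‖GG M N g j‖ ≤ ∑ x ∈ Finset.Icc (-(N : ℤ)) N, |g x| := by
    refine (norm_sum_le _ _).trans (le_of_eq ?_)
    refine Finset.sum_congr rfl (fun x _ ↦ ?_)
    rw [norm_mul, norm_ee, mul_one, Complex.norm_real, Real.norm_eq_abs]
  have h2 := sq_sum_le_card_mul_sum_sq (s := Finset.Icc (-(N : ℤ)) N) (f := fun x ↦ |g x|)
  simp only [sq_abs] at h2
  have hcard : ((Finset.Icc (-(N : ℤ)) N).card : ℝ) = 2 * N + 1 := by
    rw [Int.card_Icc]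
    have : ((N : ℤ) + 1 - -(N : ℤ)).toNat = 2 * N + 1 := by omega
    rw [this]; push_cast; ring
  rw [hcard] at h2
  rw [div_le_iff₀ (by positivity)]
  apply le_of_sq_le_sq _ (by positivity)
  rw [mul_pow, Real.sq_sqrt (by linarith)]
  have h3 : ‖GG M N g j‖ ^ 2 ≤ (∑ x ∈ Finset.Icc (-(N : ℤ)) N, |g x|) ^ 2 := by gcongr
  nlinarith

open Classical in
lemma dyadic5 (u : ℝ) (hu0 : 0 ≤ u) (hu : u ≤ 4) (I : ℕ) :
    u ^ 5 ≤ 1024 / 1024 ^ I + ∑ i ∈ Finset.range I, (1024 / 1024 ^ i : ℝ) * (if 1 / 4 ^ i ≤ u then 1 else 0) := by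
  induction I with
  | zero =>
    have : u ^ 5 ≤ 4 ^ 5 := by gcongr
    norm_num at this ⊢; exact this
  | succ I ih =>
    rw [Finset.sum_range_succ]
    have hnn : 0 ≤ ∑ i ∈ Finset.range I, (1024 / 1024 ^ i : ℝ) * (if 1 / 4 ^ i ≤ u then 1 else 0) :=
      Finset.sum_nonneg (fun i _ ↦ by split_ifs <;> positivity)
    split_ifs with h
    · have : (0 : ℝ) ≤ 1024 / 1024 ^ (I + 1) := by positivity
      linarith
    · push Not at h
      have : u ^ 5 ≤ (1 / 4 ^ I) ^ 5 := by gcongr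
      have e : (1 / 4 ^ I : ℝ) ^ 5 = 1024 / 1024 ^ (I + 1) := by
        rw [div_pow, one_pow, ← pow_mul, mul_comm I 5, pow_mul, pow_succ]; norm_num; field_simp; ring
      rw [e] at this
      linarith

open Classical in
lemma fifth_moment : ∃ C : ℝ, 1 ≤ C ∧ ∀ (N M : ℕ) (g : ℤ → ℝ), 1 ≤ N → 2 * N ^ 2 < M →
    ∑ x ∈ Finset.Icc (-(N : ℤ)) N, g x ^ 2 ≤ 1 →
    ∑ j ∈ Finset.range M, (‖GG M N g j‖ / Real.sqrt N) ^ 5 ≤ C * M / N ^ 2 := by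
  obtain ⟨C, hC, h⟩ := level_set
  refine ⟨2048 * C + 1, by linarith, fun N M g hN hM hg ↦ ?_⟩
  have hN0 : (1 : ℝ) ≤ N := by exact_mod_cast hN
  set u : ℕ → ℝ := fun j ↦ ‖GG M N g j‖ / Real.sqrt N with hu
  obtain ⟨I, hI⟩ := pow_unbounded_of_one_lt (1024 * (N : ℝ) ^ 2) (show (1 : ℝ) < 1024 by norm_num)
  have h1 : ∀ j ∈ Finset.range M, u j ^ 5 ≤ 1024 / 1024 ^ I + ∑ i ∈ Finset.range I,
      (1024 / 1024 ^ i : ℝ) * (if 1 / 4 ^ i ≤ u j then 1 else 0) := by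
    intro j _
    refine dyadic5 _ (by positivity) ?_ I
    linarith [GG_norm_le M N hN g hg j]
  refine (Finset.sum_le_sum h1).trans ?_
  rw [Finset.sum_add_distrib, Finset.sum_comm, Finset.sum_const, Finset.card_range, nsmul_eq_mul]
  have h2 : ∀ i ∈ Finset.range I, ∑ j ∈ Finset.range M,
      (1024 / 1024 ^ i : ℝ) * (if 1 / 4 ^ i ≤ u j then 1 else 0) ≤
      (1 / 2) ^ i * (1024 * C * M / N ^ 2) := by
    intro i _
    rw [← Finset.mul_sum, ← Finset.sum_filter, Finset.sum_const, nsmul_eq_mul, mul_one]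
    have := h i N M g ((Finset.range M).filter (fun j ↦ 1 / 4 ^ i ≤ u j)) hN hM hg
      (Finset.filter_subset _ _) (fun j hj ↦ by
        have := (Finset.mem_filter.1 hj).2
        simp only [hu] at this
        rwa [le_div_iff₀ (by positivity)] at this)
    rw [← le_div_iff₀ (by positivity)] at this
    calc _ ≤ 1024 / 1024 ^ i * (C * 2 ^ (9 * i) * M / N ^ 2) := by gcongr
      _ = _ := by
        rw [pow_mul]
        have : (1024 : ℝ) ^ i = 2 ^ i * (2 ^ 9) ^ i := by rw [← mul_pow]; norm_num
        rw [this, one_div_pow]; field_simp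
  have h3 : ∑ i ∈ Finset.range I, (1 / 2 : ℝ) ^ i ≤ 2 := by
    rw [geom_sum_eq (by norm_num)]
    have : (0 : ℝ) ≤ (1 / 2) ^ I := by positivity
    rw [div_le_iff_of_neg (by norm_num)]; linarith
  have h4 := Finset.sum_le_sum h2
  rw [← Finset.sum_mul] at h4
  have h5 : (∑ i ∈ Finset.range I, (1 / 2 : ℝ) ^ i) * (1024 * C * M / N ^ 2) ≤ 2 * (1024 * C * M / N ^ 2) := by
    gcongr
  have h6 : (M : ℝ) * (1024 / 1024 ^ I) ≤ M / N ^ 2 := by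
    rw [div_eq_mul_inv (M : ℝ)]
    gcongr
    rw [← one_div, div_le_div_iff₀ (by positivity) (by positivity)]
    linarith
  calc _ ≤ (M : ℝ) / N ^ 2 + 2 * (1024 * C * M / N ^ 2) := add_le_add h6 (h4.trans h5)
    _ = _ := by ring

lemma nth_moment (n : ℕ) (hn : 5 ≤ n) : ∃ C : ℝ, 1 ≤ C ∧ ∀ (N M : ℕ) (g : ℤ → ℝ), 1 ≤ N →
    2 * N ^ 2 < M → ∑ x ∈ Finset.Icc (-(N : ℤ)) N, g x ^ 2 ≤ 1 →
    ∑ j ∈ Finset.range M, (‖GG M N g j‖ / Real.sqrt N) ^ n ≤ C * M / N ^ 2 := by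
  obtain ⟨C, hC, h⟩ := fifth_moment
  refine ⟨2 ^ (n - 5) * C, one_le_mul_of_one_le_of_one_le (one_le_pow₀ one_le_two) hC,
    fun N M g hN hM hg ↦ ?_⟩
  have h1 := mul_le_mul_of_nonneg_left (h N M g hN hM hg) (by positivity : (0:ℝ) ≤ 2 ^ (n - 5))
  rw [Finset.mul_sum] at h1
  refine le_trans (Finset.sum_le_sum (fun j _ ↦ ?_)) (h1.trans (le_of_eq (by ring)))
  have : n = (n - 5) + 5 := by omega
  conv_lhs => rw [this, pow_add]
  have := GG_norm_le M N hN g hg j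
  gcongr

lemma prod_le_sum_pow (n : ℕ) (hn : 1 ≤ n) (u : Fin n → ℝ) (hu : ∀ i, 0 ≤ u i) :
    ∏ i, u i ≤ ∑ i, u i ^ n := by
  have : Nonempty (Fin n) := ⟨⟨0, hn⟩⟩
  obtain ⟨i, _, hi⟩ := Finset.exists_max_image Finset.univ u Finset.univ_nonempty
  calc ∏ k, u k ≤ ∏ _k : Fin n, u i := Finset.prod_le_prod (fun k _ ↦ hu k) (fun k hk ↦ hi k hk)
    _ = u i ^ n := by simp
    _ ≤ _ := Finset.single_le_sum (f := fun i ↦ u i ^ n) (fun k _ ↦ pow_nonneg (hu k) _)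
        (Finset.mem_univ i)

/-- Lattice points on the sphere in the box of size `N`. -/
def sphF (n N lam : ℕ) : Finset (Fin n → ℤ) :=
  (Fintype.piFinset (fun _ : Fin n ↦ Finset.Icc (-(N : ℤ)) N)).filter
    (fun x ↦ ∑ i, x i ^ 2 = (lam : ℤ))

lemma ee_sum {ι : Type*} (s : Finset ι) (f : ι → ℝ) : ee (∑ i ∈ s, f i) = ∏ i ∈ s, ee (f i) := by
  classical
  induction s using Finset.induction_on with
  | empty => simp [ee_zero]
  | insert a s ha ih => rw [Finset.sum_insert ha, Finset.prod_insert ha, ee_add, ih]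

lemma circle_method (n N lam M : ℕ) (hM : 1 ≤ M) (g : Fin n → ℤ → ℝ) (hg : ∀ i x, 0 ≤ g i x) :
    M * ∑ x ∈ sphF n N lam, ∏ i, g i (x i) ≤ ∑ j ∈ Finset.range M, ∏ i, ‖GG M N (g i) j‖ := by
  classical
  set B := Fintype.piFinset (fun _ : Fin n ↦ Finset.Icc (-(N : ℤ)) N) with hB
  have key : ∑ j ∈ Finset.range M, (∏ i, GG M N (g i) j) * ee (j * (((-(lam : ℤ) : ℤ) : ℝ) / M)) =
      ((∑ x ∈ B, (∏ i, g i (x i)) * (if (M : ℤ) ∣ (∑ i, x i ^ 2) - lam then (M : ℝ) else 0) : ℝ) : ℂ) := by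
    simp_rw [GG, Finset.prod_univ_sum, ← hB, Finset.sum_mul]
    rw [Finset.sum_comm]
    push_cast
    refine Finset.sum_congr rfl (fun x _ ↦ ?_)
    have := ee_orth M hM ((∑ i, x i ^ 2) - lam)
    push_cast at this
    have e3 : (((if (M : ℤ) ∣ (∑ i, x i ^ 2) - lam then (M : ℝ) else 0) : ℝ) : ℂ) =
        if (M : ℤ) ∣ (∑ i, x i ^ 2) - lam then (M : ℂ) else 0 := by split_ifs <;> simp
    rw [e3, ← this, Finset.mul_sum]
    refine Finset.sum_congr rfl (fun j _ ↦ ?_)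
    rw [Finset.prod_mul_distrib, mul_assoc, ← ee_sum, ← ee_add]
    congr 2
    rw [← Finset.mul_sum, ← Finset.sum_div]
    ring
  have h1 : M * ∑ x ∈ sphF n N lam, ∏ i, g i (x i) ≤
      ∑ x ∈ B, (∏ i, g i (x i)) * (if (M : ℤ) ∣ (∑ i, x i ^ 2) - lam then (M : ℝ) else 0) := by
    have : ∀ x : Fin n → ℤ, 0 ≤ ∏ i, g i (x i) := fun x ↦ Finset.prod_nonneg (fun i _ ↦ hg i _)
    rw [sphF, Finset.mul_sum, Finset.sum_filter]
    refine Finset.sum_le_sum (fun x _ ↦ ?_)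
    split_ifs with h1 h2 h2
    · rw [mul_comm]
    · rw [h1] at h2; simp at h2
    · exact mul_nonneg (this x) (by positivity)
    · simp
  refine h1.trans ?_
  refine (le_abs_self _).trans ?_
  rw [← Real.norm_eq_abs, ← Complex.norm_real, ← key]
  refine (norm_sum_le _ _).trans (le_of_eq (Finset.sum_congr rfl (fun j _ ↦ ?_)))
  rw [norm_mul, norm_ee, mul_one, norm_prod]

lemma GG_smul (M N : ℕ) (g : ℤ → ℝ) (c : ℝ) (j : ℕ) :
    GG M N (fun x ↦ c * g x) j = c * GG M N g j := by
  rw [GG, GG, Finset.mul_sum]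
  refine Finset.sum_congr rfl (fun x _ ↦ ?_)
  push_cast; ring

lemma multilinear (n : ℕ) (hn : 5 ≤ n) : ∃ C : ℝ, 1 ≤ C ∧ ∀ (N lam : ℕ) (g : Fin n → ℤ → ℝ), 1 ≤ N →
    (∀ i x, 0 ≤ g i x) →
    ∑ x ∈ sphF n N lam, ∏ i, g i (x i) ≤ C * Real.sqrt N ^ n / N ^ 2 *
      ∏ i, Real.sqrt (∑ x ∈ Finset.Icc (-(N : ℤ)) N, g i x ^ 2) := by
  obtain ⟨C, hC, h⟩ := nth_moment n hn
  have hn1 : (1 : ℝ) ≤ n := by exact_mod_cast (by omega : 1 ≤ n)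
  refine ⟨n * C, one_le_mul_of_one_le_of_one_le hn1 hC, fun N lam g hN hg ↦ ?_⟩
  have hN0 : (1 : ℝ) ≤ N := by exact_mod_cast hN
  set A : Fin n → ℝ := fun i ↦ Real.sqrt (∑ x ∈ Finset.Icc (-(N : ℤ)) N, g i x ^ 2) with hA
  have hA0 : ∀ i, 0 ≤ A i := fun i ↦ Real.sqrt_nonneg _
  by_cases hz : ∃ i, A i = 0
  · obtain ⟨i, hi⟩ := hz
    have h0 : ∑ x ∈ Finset.Icc (-(N : ℤ)) N, g i x ^ 2 = 0 := by
      have : 0 ≤ ∑ x ∈ Finset.Icc (-(N : ℤ)) N, g i x ^ 2 := Finset.sum_nonneg (fun _ _ ↦ sq_nonneg _)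
      exact (Real.sqrt_eq_zero this).1 hi
    rw [Finset.sum_eq_zero_iff_of_nonneg (fun _ _ ↦ sq_nonneg _)] at h0
    have h1 : ∑ x ∈ sphF n N lam, ∏ i, g i (x i) = 0 := by
      refine Finset.sum_eq_zero (fun x hx ↦ Finset.prod_eq_zero (Finset.mem_univ i) ?_)
      have := Fintype.mem_piFinset.1 (Finset.mem_filter.1 hx).1 i
      simpa using h0 _ this
    rw [h1]
    have : 0 ≤ ∏ i, A i := Finset.prod_nonneg (fun i _ ↦ hA0 i)
    positivity
  · push Not at hz
    have hApos : ∀ i, 0 < A i := fun i ↦ lt_of_le_of_ne (hA0 i) (hz i).symm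
    set M := 2 * N ^ 2 + 1 with hM
    have hM1 : 1 ≤ M := by omega
    have hMpos : (0 : ℝ) < M := by exact_mod_cast hM1
    have h1 := circle_method n N lam M hM1 g hg
    have h2 : ∀ j, ∏ i, ‖GG M N (g i) j‖ = (Real.sqrt N ^ n * ∏ i, A i) *
        ∏ i, (‖GG M N (fun x ↦ (A i)⁻¹ * g i x) j‖ / Real.sqrt N) := by
      intro j
      have : Real.sqrt N ^ n = ∏ _i : Fin n, Real.sqrt N := by simp
      rw [this, ← Finset.prod_mul_distrib, ← Finset.prod_mul_distrib]
      refine Finset.prod_congr rfl (fun i _ ↦ ?_)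
      rw [GG_smul, norm_mul, Complex.norm_real, Real.norm_of_nonneg (inv_nonneg.2 (hA0 i))]
      have := (hApos i).ne'
      have : Real.sqrt N ≠ 0 := by positivity
      field_simp
    simp_rw [h2] at h1
    rw [← Finset.mul_sum] at h1
    have h3 : ∑ j ∈ Finset.range M, ∏ i, (‖GG M N (fun x ↦ (A i)⁻¹ * g i x) j‖ / Real.sqrt N) ≤
        n * (C * M / N ^ 2) := by
      calc _ ≤ ∑ j ∈ Finset.range M, ∑ i, (‖GG M N (fun x ↦ (A i)⁻¹ * g i x) j‖ / Real.sqrt N) ^ n :=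
            Finset.sum_le_sum (fun j _ ↦ prod_le_sum_pow n (by omega) _ (fun i ↦ by positivity))
        _ = ∑ i, ∑ j ∈ Finset.range M, (‖GG M N (fun x ↦ (A i)⁻¹ * g i x) j‖ / Real.sqrt N) ^ n :=
            Finset.sum_comm
        _ ≤ ∑ _i : Fin n, C * M / N ^ 2 := by
            refine Finset.sum_le_sum (fun i _ ↦ h N M _ hN (by omega) ?_)
            simp_rw [mul_pow]
            rw [← Finset.mul_sum]
            have : ∑ x ∈ Finset.Icc (-(N : ℤ)) N, g i x ^ 2 = A i ^ 2 := by
              rw [hA, Real.sq_sqrt (Finset.sum_nonneg (fun _ _ ↦ sq_nonneg _))]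
            rw [this, ← mul_pow, inv_mul_cancel₀ (hApos i).ne', one_pow]
        _ = _ := by simp
    have hAp : 0 ≤ ∏ i, A i := Finset.prod_nonneg (fun i _ ↦ hA0 i)
    have h4 := h1.trans (mul_le_mul_of_nonneg_left h3 (by positivity))
    refine le_of_mul_le_mul_left (h4.trans (le_of_eq ?_)) hMpos
    ring

/-! ### Representations by two squares: lower bound -/

/-- Gaussian integers of norm `a`. -/
def gs (a : ℕ) : Finset GaussianInt :=
  ((Finset.Icc (-(a : ℤ)) a ×ˢ Finset.Icc (-(a : ℤ)) a).image
    (fun p ↦ (⟨p.1, p.2⟩ : GaussianInt))).filter (fun z ↦ z.norm = (a : ℤ))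

lemma gi_norm (z : GaussianInt) : z.norm = z.re ^ 2 + z.im ^ 2 := by
  rw [Zsqrtd.norm_def]; ring

lemma mem_gs (a : ℕ) (z : GaussianInt) : z ∈ gs a ↔ z.norm = (a : ℤ) := by
  unfold gs
  rw [Finset.mem_filter, Finset.mem_image]
  refine ⟨fun h ↦ h.2, fun h ↦ ⟨⟨(z.re, z.im), ?_, rfl⟩, h⟩⟩
  rw [gi_norm] at h
  simp only [Finset.mem_product, Finset.mem_Icc]
  have h1 : ∀ t : ℤ, t ≤ t ^ 2 ∧ - t ≤ t ^ 2 := fun t ↦ by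
    have h := Int.le_self_sq t
    have h' := Int.le_self_sq (-t)
    rw [neg_sq] at h'
    exact ⟨h, h'⟩
  have := h1 z.re
  have := h1 z.im
  have := sq_nonneg z.re
  have := sq_nonneg z.im
  refine ⟨⟨?_, ?_⟩, ⟨?_, ?_⟩⟩ <;> linarith

lemma gs_one : (gs 1).card = 4 := by
  decide +kernel

lemma dvd_norm_gi (z : GaussianInt) : z ∣ ((z.norm : ℤ) : GaussianInt) :=
  ⟨star z, Zsqrtd.norm_eq_mul_conj z⟩

lemma isCoprime_of_norm {a b : ℕ} (hab : Nat.Coprime a b) {z w : GaussianInt}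
    (hz : z.norm = a) (hw : w.norm = b) : IsCoprime z w := by
  have h1 : IsCoprime ((a : ℤ)) (b : ℤ) := Nat.isCoprime_iff_coprime.2 hab
  have h2 : IsCoprime (((a : ℤ)) : GaussianInt) ((b : ℤ) : GaussianInt) :=
    h1.map (Int.castRingHom GaussianInt)
  have h3 := dvd_norm_gi z
  have h4 := dvd_norm_gi w
  rw [hz] at h3
  rw [hw] at h4
  exact (h2.of_isCoprime_of_dvd_left h3).of_isCoprime_of_dvd_right h4

lemma gs_mul_le (a b : ℕ) (ha : a ≠ 0) (hab : Nat.Coprime a b) :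
    (gs a).card * (gs b).card ≤ 4 * (gs (a * b)).card := by
  rw [← Finset.card_product]
  refine Finset.card_le_mul_card_image_of_maps_to
    (f := fun p : GaussianInt × GaussianInt ↦ p.1 * p.2) ?_ 4 ?_
  · rintro ⟨z, w⟩ h
    simp only [Finset.mem_product, mem_gs] at h ⊢
    rw [Zsqrtd.norm_mul, h.1, h.2]
    push_cast; rfl
  · intro c _
    rcases Finset.eq_empty_or_nonempty
      ({p ∈ gs a ×ˢ gs b | p.1 * p.2 = c}) with he | ⟨⟨z0, w0⟩, h0⟩
    · rw [he]; simp
    · rw [← gs_one]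
      refine le_trans (Finset.card_le_card (t := (gs 1).image
        (fun u ↦ (z0 * u, star u * w0))) ?_) Finset.card_image_le
      rintro ⟨z, w⟩ h
      simp only [Finset.mem_filter, Finset.mem_product, mem_gs] at h h0
      obtain ⟨⟨hz0, hw0⟩, hc0⟩ := h0
      obtain ⟨⟨hz, hw⟩, hc⟩ := h
      have hdiv : z0 ∣ z := by
        have h1 : z0 ∣ z * w := by rw [hc, ← hc0]; exact dvd_mul_right _ _
        exact (isCoprime_of_norm hab hz0 hw).dvd_of_dvd_mul_right h1
      obtain ⟨u, hu⟩ := hdiv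
      have hun : u.norm = 1 := by
        have h1 := hz
        rw [hu, Zsqrtd.norm_mul, hz0] at h1
        have h2 : (a : ℤ) ≠ 0 := by exact_mod_cast ha
        exact mul_left_cancel₀ h2 (by rw [h1, mul_one])
      have huu : u * star u = 1 := by
        rw [← Zsqrtd.norm_eq_mul_conj, hun]; simp
      have hz00 : z0 ≠ 0 := by
        rintro rfl
        rw [Zsqrtd.norm_zero] at hz0
        exact ha (by exact_mod_cast hz0.symm)
      have hww : w0 = u * w := by
        apply mul_left_cancel₀ hz00
        rw [hc0, ← hc, hu]; ring
      rw [Finset.mem_image]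
      refine ⟨u, (mem_gs 1 u).2 (by rw [hun]; rfl), ?_⟩
      rw [hu, hww, ← mul_assoc, mul_comm (star u) u, huu, one_mul]

lemma gi_norm_pow (z : GaussianInt) (k : ℕ) : (z ^ k).norm = z.norm ^ k := by
  induction k with
  | zero => simp
  | succ k ih => rw [pow_succ, Zsqrtd.norm_mul, ih, pow_succ]

lemma gs_prime_one (p k : ℕ) [hp : Fact p.Prime] (h1 : p % 4 = 1) :
    4 * (k + 1) ≤ (gs (p ^ k)).card := by
  obtain ⟨x, y, hxy⟩ := Nat.Prime.sq_add_sq (p := p) (by omega)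
  set π : GaussianInt := ⟨x, y⟩ with hπ
  have hn : π.norm = p := by rw [gi_norm, ← hxy]; push_cast; rfl
  have hn' : (star π).norm = p := by rw [Zsqrtd.norm_conj, hn]
  have hp1 : (1 : ℤ) < p := by exact_mod_cast hp.out.one_lt
  have hcop : IsCoprime π (star π) := by
    have h2 : Nat.Coprime p (2 * x) := by
      rw [Nat.Prime.coprime_iff_not_dvd hp.out]
      intro hd
      have hx : p ∣ x := by
        rcases (Nat.Prime.dvd_mul hp.out).1 hd with h | h
        · have := Nat.le_of_dvd (by norm_num) h
          have := hp.out.two_le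
          omega
        · exact h
      have hx0 : x ≠ 0 := by
        rintro rfl
        have hy : p = y ^ 2 := by rw [← hxy]; ring
        have := hp.out
        rw [hy] at this
        exact Nat.Prime.not_prime_pow le_rfl this
      have := Nat.le_of_dvd (Nat.pos_of_ne_zero hx0) hx
      have := hp.out.two_le
      nlinarith
    have h3 : IsCoprime ((p : ℤ) : GaussianInt) ((2 * x : ℤ) : GaussianInt) := by
      have : IsCoprime (p : ℤ) ((2 * x : ℕ) : ℤ) := Nat.isCoprime_iff_coprime.2 h2
      have := this.map (Int.castRingHom GaussianInt)
      simpa using this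
    obtain ⟨s, t, hst⟩ := h3
    have e1 : ((p : ℤ) : GaussianInt) = π * star π := by
      rw [← Zsqrtd.norm_eq_mul_conj, hn]
    have e2 : ((2 * x : ℤ) : GaussianInt) = π + star π := by
      ext
      · simp [hπ]; ring
      · simp [hπ]
    rw [e1, e2] at hst
    refine ⟨s * star π + t, t, ?_⟩
    rw [← hst]; ring
  have hπ0 : π ≠ 0 := by
    intro h; rw [h, Zsqrtd.norm_zero] at hn; omega
  have hπ0' : star π ≠ 0 := by
    intro h; rw [h, Zsqrtd.norm_zero] at hn'; omega
  have key : ∀ (i j : ℕ) (u v : GaussianInt), i ≤ j → j ≤ k → u.norm = 1 → v.norm = 1 →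
      u * π ^ i * star π ^ (k - i) = v * π ^ j * star π ^ (k - j) → i = j ∧ u = v := by
    intro i j u v hij hjk hu hv h
    obtain ⟨d, rfl⟩ := Nat.exists_eq_add_of_le hij
    have e : k - i = (k - (i + d)) + d := by omega
    have h2 : u * star π ^ d = v * π ^ d := by
      apply mul_left_cancel₀ (mul_ne_zero (pow_ne_zero i hπ0) (pow_ne_zero (k - (i + d)) hπ0'))
      rw [e, pow_add, pow_add] at h
      linear_combination h
    have hd : d = 0 := by
      by_contra hd
      have h3 : π ^ d ∣ u * star π ^ d := by rw [h2]; exact dvd_mul_left _ _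
      have h4 : π ^ d ∣ u := (hcop.pow (m := d) (n := d)).dvd_of_dvd_mul_right h3
      obtain ⟨w, hw⟩ := h4
      rw [hw, Zsqrtd.norm_mul, gi_norm_pow, hn] at hu
      have h5 : (p : ℤ) ∣ 1 := by
        rw [← hu]; exact Dvd.dvd.mul_right (dvd_pow_self _ hd) _
      have := Int.le_of_dvd one_pos h5
      omega
    subst hd
    simpa using h2
  have hc : 4 * (k + 1) = (gs 1 ×ˢ Finset.range (k + 1)).card := by
    rw [Finset.card_product, gs_one, Finset.card_range]
  rw [hc]
  refine Finset.card_le_card_of_injOn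
    (fun q ↦ q.1 * π ^ q.2 * star π ^ (k - q.2)) ?_ ?_
  · rintro ⟨u, j⟩ h
    simp only [Finset.coe_product, Set.mem_prod, Finset.mem_coe, mem_gs, Finset.mem_range] at h ⊢
    rw [Zsqrtd.norm_mul, Zsqrtd.norm_mul, gi_norm_pow, gi_norm_pow, hn, hn', h.1, mul_assoc,
      ← pow_add, show j + (k - j) = k by omega]
    push_cast; ring
  · rintro ⟨u, i⟩ h ⟨v, j⟩ h' he
    simp only [Finset.coe_product, Set.mem_prod, Finset.mem_coe, mem_gs, Finset.mem_range,
      Nat.cast_one] at h h' he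
    rcases le_total i j with hij | hij
    · obtain ⟨r1, r2⟩ := key i j u v hij (by omega) h.1 h'.1 he
      rw [r1, r2]
    · obtain ⟨r1, r2⟩ := key j i v u hij (by omega) h'.1 h.1 he.symm
      rw [r1, r2]

lemma gs_sq (m : ℕ) (hm : m ≠ 0) : 4 ≤ (gs (m ^ 2)).card := by
  rw [← gs_one]
  have hm' : ((m : ℤ) : GaussianInt) ≠ 0 := by
    intro h
    have := congrArg Zsqrtd.re h
    simp at this
    exact hm this
  refine Finset.card_le_card_of_injOn (fun u ↦ ((m : ℤ) : GaussianInt) * u) ?_ ?_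
  · intro u h
    simp only [Finset.mem_coe, mem_gs] at h ⊢
    rw [Zsqrtd.norm_mul, h, Zsqrtd.norm_intCast]
    push_cast; ring
  · intro u _ v _ h
    exact mul_left_cancel₀ hm' h

/-- The divisor sum of the nontrivial character mod 4. -/
def Rchi (a : ℕ) : ℤ := ∑ d ∈ a.divisors, ZMod.χ₄ d

lemma Rchi_mul {a b : ℕ} (h : Nat.Coprime a b) : Rchi (a * b) = Rchi a * Rchi b := by
  let f : ArithmeticFunction ℤ := ⟨fun d ↦ if d = 0 then 0 else ZMod.χ₄ d, by simp⟩
  have hf : f.IsMultiplicative := by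
    refine ArithmeticFunction.IsMultiplicative.iff_ne_zero.2 ⟨by simp [f], ?_⟩
    intro m n hm hn _
    have hmn : m * n ≠ 0 := mul_ne_zero hm hn
    change (if m * n = 0 then (0 : ℤ) else ZMod.χ₄ ((m * n : ℕ) : ZMod 4)) =
      (if m = 0 then 0 else ZMod.χ₄ (m : ZMod 4)) * (if n = 0 then 0 else ZMod.χ₄ (n : ZMod 4))
    rw [if_neg hmn, if_neg hm, if_neg hn, Nat.cast_mul, map_mul]
  have hR : ∀ a, Rchi a = ((ArithmeticFunction.zeta : ArithmeticFunction ℤ) * f) a := by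
    intro a
    rw [ArithmeticFunction.coe_zeta_mul_apply]
    refine Finset.sum_congr rfl (fun d hd ↦ ?_)
    have : d ≠ 0 := by
      rintro rfl
      simp at hd
    simp [f, this]
  rw [hR, hR, hR]
  exact ((ArithmeticFunction.isMultiplicative_zeta.natCast).mul hf).map_mul_of_coprime h

lemma Rchi_prime_pow (p k : ℕ) (hp : p.Prime) : Rchi (p ^ k) = ∑ j ∈ Finset.range (k + 1), (ZMod.χ₄ p) ^ j := by
  unfold Rchi
  rw [Nat.divisors_prime_pow hp, Finset.sum_map]
  refine Finset.sum_congr rfl (fun j _ ↦ ?_)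
  change ZMod.χ₄ ((p ^ j : ℕ) : ZMod 4) = _
  rw [Nat.cast_pow, map_pow]

lemma gs_ge_Rchi (a : ℕ) (ha : a % 2 = 1) : 0 ≤ Rchi a ∧ 4 * Rchi a ≤ (gs a).card := by
  induction a using Nat.recOnPosPrimePosCoprime with
  | zero => omega
  | one => simp [Rchi, gs_one]
  | prime_pow p k hp hk =>
    have : Fact p.Prime := ⟨hp⟩
    have hodd : p % 2 = 1 := by
      rcases hp.eq_two_or_odd with h | h
      · subst h
        obtain ⟨k, rfl⟩ : ∃ l, k = l + 1 := ⟨k - 1, by omega⟩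
        rw [pow_succ] at ha
        omega
      · exact h
    rw [Rchi_prime_pow p k hp]
    rcases (show p % 4 = 1 ∨ p % 4 = 3 by omega) with h | h
    · rw [ZMod.χ₄_nat_one_mod_four h]
      simp only [one_pow, Finset.sum_const, Finset.card_range, nsmul_eq_mul, mul_one]
      refine ⟨by positivity, ?_⟩
      exact_mod_cast gs_prime_one p k h
    · rw [ZMod.χ₄_nat_three_mod_four h]
      rcases Nat.even_or_odd k with he | ho
      · have : ∑ j ∈ Finset.range (k + 1), (-1 : ℤ) ^ j = 1 := by
          rw [neg_one_geom_sum, if_neg (by simpa [Nat.even_add_one] using he)]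
        rw [this]
        obtain ⟨l, rfl⟩ := he
        have := gs_sq (p ^ l) (pow_ne_zero _ hp.ne_zero)
        rw [← pow_mul, mul_two] at this
        refine ⟨by norm_num, ?_⟩
        exact_mod_cast this
      · have : ∑ j ∈ Finset.range (k + 1), (-1 : ℤ) ^ j = 0 := by
          rw [neg_one_geom_sum, if_pos (by simpa [Nat.even_add_one] using ho)]
        rw [this]
        simp
  | coprime a b ha1 hb1 hab iha ihb =>
    have h := Nat.odd_mul.1 (Nat.odd_iff.2 ha)
    obtain ⟨a0, a1⟩ := iha (Nat.odd_iff.1 h.1)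
    obtain ⟨b0, b1⟩ := ihb (Nat.odd_iff.1 h.2)
    rw [Rchi_mul hab]
    refine ⟨mul_nonneg a0 b0, ?_⟩
    have := gs_mul_le a b (by omega) hab
    have h5 : ((gs a).card : ℤ) * (gs b).card ≤ 4 * (gs (a * b)).card := by exact_mod_cast this
    have := mul_le_mul a1 b1 (by positivity) (by positivity)
    linarith

/-! ### The Dirichlet involution and four squares -/

/-- The set of quadruples of odd positive integers with `dδ + eε = 2 * m`. -/
def dirS (m : ℕ) : Finset (ℕ × ℕ × ℕ × ℕ) :=
  (Finset.range (2 * m + 1) ×ˢ Finset.range (2 * m + 1) ×ˢ Finset.range (2 * m + 1) ×ˢ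
    Finset.range (2 * m + 1)).filter (fun x ↦ x.1 % 2 = 1 ∧ x.2.1 % 2 = 1 ∧ x.2.2.1 % 2 = 1 ∧
      x.2.2.2 % 2 = 1 ∧ x.1 * x.2.1 + x.2.2.1 * x.2.2.2 = 2 * m)

lemma mem_dirS (m d δ e ε : ℕ) : (d, δ, e, ε) ∈ dirS m ↔
    d % 2 = 1 ∧ δ % 2 = 1 ∧ e % 2 = 1 ∧ ε % 2 = 1 ∧ d * δ + e * ε = 2 * m := by
  unfold dirS
  rw [Finset.mem_filter]
  refine ⟨fun h ↦ h.2, fun h ↦ ⟨?_, h⟩⟩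
  obtain ⟨h1, h2, h3, h4, h5⟩ := h
  simp only [Finset.mem_product, Finset.mem_range]
  have a1 : d ≤ d * δ := Nat.le_mul_of_pos_right _ (by omega)
  have a2 : δ ≤ d * δ := Nat.le_mul_of_pos_left _ (by omega)
  have a3 : e ≤ e * ε := Nat.le_mul_of_pos_right _ (by omega)
  have a4 : ε ≤ e * ε := Nat.le_mul_of_pos_left _ (by omega)
  refine ⟨?_, ?_, ?_, ?_⟩ <;> omega

/-- The summand. -/
def dirf (x : ℕ × ℕ × ℕ × ℕ) : ℤ := ZMod.χ₄ x.1 * ZMod.χ₄ x.2.2.1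

lemma chi_mul_chi (d e : ℕ) (hd : d % 2 = 1) (he : e % 2 = 1) :
    (ZMod.χ₄ d * ZMod.χ₄ e : ℤ) = if d % 4 = e % 4 then 1 else -1 := by
  rcases (show d % 4 = 1 ∨ d % 4 = 3 by omega) with h | h <;>
  rcases (show e % 4 = 1 ∨ e % 4 = 3 by omega) with h' | h'
  · rw [ZMod.χ₄_nat_one_mod_four h, ZMod.χ₄_nat_one_mod_four h', h, h']; rfl
  · rw [ZMod.χ₄_nat_one_mod_four h, ZMod.χ₄_nat_three_mod_four h', h, h']; rfl
  · rw [ZMod.χ₄_nat_three_mod_four h, ZMod.χ₄_nat_one_mod_four h', h, h']; rfl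
  · rw [ZMod.χ₄_nat_three_mod_four h, ZMod.χ₄_nat_three_mod_four h', h, h']; rfl

/-- The Dirichlet involution. -/
def dirI (x : ℕ × ℕ × ℕ × ℕ) : ℕ × ℕ × ℕ × ℕ :=
  (x.1 / (x.1 - x.2.2.1) * (x.2.1 + x.2.2.2) + x.2.1, x.1 % (x.1 - x.2.2.1),
    (x.1 / (x.1 - x.2.2.1) - 1) * (x.2.1 + x.2.2.2) + x.2.1,
    (x.1 - x.2.2.1) - x.1 % (x.1 - x.2.2.1))

lemma dirI_param (v w r s δ : ℕ) (hr : r < w) (hδ : δ < s) :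
    dirI ((v + 1) * w + r, δ, v * w + r, s - δ) = ((v + 1) * s + δ, r, v * s + δ, w - r) := by
  have h1 : (v + 1) * w + r - (v * w + r) = w := by
    rw [add_mul]; omega
  have h2 : ((v + 1) * w + r) / w = v + 1 := by
    rw [mul_comm, Nat.mul_add_div (by omega), Nat.div_eq_of_lt hr, add_zero]
  have h3 : ((v + 1) * w + r) % w = r := by
    rw [mul_comm, Nat.mul_add_mod, Nat.mod_eq_of_lt hr]
  simp only [dirI, h1, h2, h3, Nat.add_sub_cancel]
  rw [show δ + (s - δ) = s by omega]

lemma dir_param (m d δ e ε : ℕ) (hx : (d, δ, e, ε) ∈ dirS m) (hde : e < d) :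
    ∃ v w r s, d = (v + 1) * w + r ∧ e = v * w + r ∧ ε = s - δ ∧ r < w ∧ δ < s ∧
      w % 2 = 0 ∧ s % 2 = 0 ∧ r % 2 = 1 ∧ δ % 2 = 1 ∧ v * w * s + w * δ + r * s = 2 * m := by
  rw [mem_dirS] at hx
  obtain ⟨h1, h2, h3, h4, h5⟩ := hx
  obtain ⟨w, rfl⟩ := Nat.exists_eq_add_of_lt hde
  set W := w + 1 with hW
  have hWe : W % 2 = 0 := by omega
  have hq := Nat.div_add_mod e W
  set v := e / W with hv
  set r := e % W with hr
  have hWv : 2 ∣ W * v := Dvd.dvd.mul_right (Nat.dvd_of_mod_eq_zero hWe) _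
  refine ⟨v, W, r, δ + ε, ?_, ?_, ?_, Nat.mod_lt _ (by omega), by omega, hWe, by omega, ?_, h2, ?_⟩
  · rw [add_mul, mul_comm v]; omega
  · rw [mul_comm v]; omega
  · omega
  · omega
  · rw [← h5, add_assoc e w 1, ← hW, ← hq]; ring

lemma dir_mem (m v w r s δ : ℕ) (hr : r < w) (hδ : δ < s) (hw : w % 2 = 0) (hs : s % 2 = 0)
    (hr1 : r % 2 = 1) (hd1 : δ % 2 = 1) (h : v * w * s + w * δ + r * s = 2 * m) :
    ((v + 1) * s + δ, r, v * s + δ, w - r) ∈ dirS m := by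
  rw [mem_dirS]
  have hs1 : 2 ∣ (v + 1) * s := Dvd.dvd.mul_left (Nat.dvd_of_mod_eq_zero hs) _
  have hs2 : 2 ∣ v * s := Dvd.dvd.mul_left (Nat.dvd_of_mod_eq_zero hs) _
  refine ⟨by omega, hr1, by omega, by omega, ?_⟩
  obtain ⟨t, rfl⟩ := Nat.exists_eq_add_of_lt hr
  rw [show r + t + 1 - r = t + 1 by omega, ← h]
  ring

lemma dir_sign (m v w r s δ : ℕ) (hm : m % 2 = 1) (hw : w % 2 = 0) (hs : s % 2 = 0)
    (hr1 : r % 2 = 1) (hd1 : δ % 2 = 1) (h : v * w * s + w * δ + r * s = 2 * m) :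
    dirf ((v + 1) * w + r, δ, v * w + r, s - δ) + dirf ((v + 1) * s + δ, r, v * s + δ, w - r) = 0 := by
  have hs1 : 2 ∣ (v + 1) * s := Dvd.dvd.mul_left (Nat.dvd_of_mod_eq_zero hs) _
  have hs2 : 2 ∣ v * s := Dvd.dvd.mul_left (Nat.dvd_of_mod_eq_zero hs) _
  have hw1 : 2 ∣ (v + 1) * w := Dvd.dvd.mul_left (Nat.dvd_of_mod_eq_zero hw) _
  have hw2 : 2 ∣ v * w := Dvd.dvd.mul_left (Nat.dvd_of_mod_eq_zero hw) _
  simp only [dirf]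
  rw [chi_mul_chi _ _ (by omega) (by omega), chi_mul_chi _ _ (by omega) (by omega)]
  have key : (w % 4 = 0 ∧ s % 4 = 2) ∨ (w % 4 = 2 ∧ s % 4 = 0) := by
    obtain ⟨a, rfl⟩ := Nat.dvd_of_mod_eq_zero hw
    obtain ⟨b, rfl⟩ := Nat.dvd_of_mod_eq_zero hs
    obtain ⟨c, hc⟩ : ∃ c, r = 2 * c + 1 := ⟨r / 2, by omega⟩
    obtain ⟨f, hf⟩ : ∃ f, δ = 2 * f + 1 := ⟨δ / 2, by omega⟩
    subst hc hf
    have : 2 * (v * a * b + a * f + b * c) + a + b = m := by nlinarith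
    omega
  rw [add_mul, add_mul, one_mul, one_mul]
  rcases key with ⟨k1, k2⟩ | ⟨k1, k2⟩
  · rw [if_pos (by omega), if_neg (by omega)]; rfl
  · rw [if_neg (by omega), if_pos (by omega)]; rfl

lemma dir_gt (m : ℕ) (hm : m % 2 = 1) :
    ∑ x ∈ (dirS m).filter (fun x ↦ x.2.2.1 < x.1), dirf x = 0 := by
  refine Finset.sum_involution (fun x _ ↦ dirI x) ?_ ?_ ?_ ?_
  · rintro ⟨d, δ, e, ε⟩ hx
    rw [Finset.mem_filter] at hx
    obtain ⟨v, w, r, s, rfl, rfl, rfl, hr, hδ, hw, hs, hr1, hd1, h⟩ :=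
      dir_param m d δ e ε hx.1 hx.2
    rw [dirI_param v w r s δ hr hδ]
    exact dir_sign m v w r s δ hm hw hs hr1 hd1 h
  · rintro ⟨d, δ, e, ε⟩ hx hne heq
    rw [Finset.mem_filter] at hx
    obtain ⟨v, w, r, s, rfl, rfl, rfl, hr, hδ, hw, hs, hr1, hd1, h⟩ :=
      dir_param m d δ e ε hx.1 hx.2
    rw [dirI_param v w r s δ hr hδ] at heq
    have := dir_sign m v w r s δ hm hw hs hr1 hd1 h
    rw [heq] at this
    omega
  · rintro ⟨d, δ, e, ε⟩ hx
    rw [Finset.mem_filter] at hx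
    obtain ⟨v, w, r, s, rfl, rfl, rfl, hr, hδ, hw, hs, hr1, hd1, h⟩ :=
      dir_param m d δ e ε hx.1 hx.2
    rw [dirI_param v w r s δ hr hδ, Finset.mem_filter]
    refine ⟨dir_mem m v w r s δ hr hδ hw hs hr1 hd1 h, ?_⟩
    simp only [add_mul]
    omega
  · rintro ⟨d, δ, e, ε⟩ hx
    rw [Finset.mem_filter] at hx
    obtain ⟨v, w, r, s, rfl, rfl, rfl, hr, hδ, hw, hs, hr1, hd1, h⟩ :=
      dir_param m d δ e ε hx.1 hx.2
    simp only [dirI_param v w r s δ hr hδ, dirI_param v s δ w r hδ hr]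

lemma dir_lt (m : ℕ) (hm : m % 2 = 1) :
    ∑ x ∈ (dirS m).filter (fun x ↦ x.1 < x.2.2.1), dirf x = 0 := by
  rw [← dir_gt m hm]
  refine Finset.sum_nbij' (fun x ↦ (x.2.2.1, x.2.2.2, x.1, x.2.1))
    (fun x ↦ (x.2.2.1, x.2.2.2, x.1, x.2.1)) ?_ ?_ ?_ ?_ ?_
  · rintro ⟨d, δ, e, ε⟩ hx
    simp only [Finset.mem_filter, mem_dirS] at hx ⊢
    omega
  · rintro ⟨d, δ, e, ε⟩ hx
    simp only [Finset.mem_filter, mem_dirS] at hx ⊢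
    omega
  · rintro ⟨d, δ, e, ε⟩ hx; rfl
  · rintro ⟨d, δ, e, ε⟩ hx; rfl
  · rintro ⟨d, δ, e, ε⟩ hx
    simp only [dirf]
    ring

lemma dir_eq (m : ℕ) (hm : m % 2 = 1) :
    (m : ℤ) ≤ ∑ x ∈ (dirS m).filter (fun x ↦ x.1 = x.2.2.1), dirf x := by
  have h1 : ∑ x ∈ (dirS m).filter (fun x ↦ x.1 = x.2.2.1), dirf x =
      ((dirS m).filter (fun x ↦ x.1 = x.2.2.1)).card := by
    rw [Finset.card_eq_sum_ones, Nat.cast_sum]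
    refine Finset.sum_congr rfl ?_
    rintro ⟨d, δ, e, ε⟩ hx
    simp only [Finset.mem_filter, mem_dirS] at hx
    simp only [dirf]
    rw [chi_mul_chi _ _ hx.1.1 hx.1.2.2.1, if_pos (by rw [hx.2])]
    rfl
  rw [h1]
  have h2 : m = (Finset.range m).card := by simp
  conv_lhs => rw [h2]
  norm_cast
  refine Finset.card_le_card_of_injOn (fun k ↦ (1, 2 * k + 1, 1, 2 * m - (2 * k + 1))) ?_ ?_
  · intro k hk
    simp only [Finset.mem_coe, Finset.mem_range] at hk
    rw [Finset.mem_coe, Finset.mem_filter, mem_dirS]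
    refine ⟨⟨by norm_num, by omega, by norm_num, by omega, by omega⟩, rfl⟩
  · intro k _ l _ h
    simp only [Prod.mk.injEq] at h
    omega

lemma dir_sum (m : ℕ) (hm : m % 2 = 1) : (m : ℤ) ≤ ∑ x ∈ dirS m, dirf x := by
  rw [← Finset.sum_filter_add_sum_filter_not (dirS m) (fun x ↦ x.2.2.1 < x.1),
    dir_gt m hm, zero_add,
    ← Finset.sum_filter_add_sum_filter_not _ (fun x : ℕ × ℕ × ℕ × ℕ ↦ x.1 < x.2.2.1),
    Finset.filter_filter, Finset.filter_filter]
  have e1 : (dirS m).filter (fun x ↦ ¬ x.2.2.1 < x.1 ∧ x.1 < x.2.2.1) =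
      (dirS m).filter (fun x ↦ x.1 < x.2.2.1) := by
    refine Finset.filter_congr (fun x _ ↦ ?_)
    omega
  have e2 : (dirS m).filter (fun x ↦ ¬ x.2.2.1 < x.1 ∧ ¬ x.1 < x.2.2.1) =
      (dirS m).filter (fun x ↦ x.1 = x.2.2.1) := by
    refine Finset.filter_congr (fun x _ ↦ ?_)
    omega
  rw [e1, e2, dir_lt m hm, zero_add]
  exact dir_eq m hm

lemma dir_sum_eq (m : ℕ) : ∑ x ∈ dirS m, dirf x =
    ∑ a ∈ (Finset.range (2 * m)).filter (fun a ↦ a % 2 = 1), Rchi a * Rchi (2 * m - a) := by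
  rw [← Finset.sum_fiberwise_of_maps_to (s := dirS m)
    (t := (Finset.range (2 * m)).filter (fun a ↦ a % 2 = 1)) (g := fun x ↦ x.1 * x.2.1)]
  · refine Finset.sum_congr rfl (fun a ha ↦ ?_)
    simp only [Finset.mem_filter, Finset.mem_range] at ha
    unfold Rchi
    rw [Finset.sum_mul_sum, ← Finset.sum_product']
    refine Finset.sum_nbij' (fun x ↦ (x.1, x.2.2.1))
      (fun p ↦ (p.1, a / p.1, p.2, (2 * m - a) / p.2)) ?_ ?_ ?_ ?_ ?_
    · rintro ⟨d, δ, e, ε⟩ hx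
      simp only [Finset.mem_filter, mem_dirS] at hx
      simp only [Finset.mem_product, Nat.mem_divisors]
      obtain ⟨⟨-, -, -, -, h⟩, rfl⟩ := hx
      refine ⟨⟨dvd_mul_right _ _, by omega⟩, ⟨⟨ε, by omega⟩, by omega⟩⟩
    · rintro ⟨d, e⟩ hx
      simp only [Finset.mem_product, Nat.mem_divisors] at hx
      obtain ⟨⟨⟨δ, h1⟩, h2⟩, ⟨⟨ε, h3⟩, h4⟩⟩ := hx
      have hd : 0 < d := by
        rcases Nat.eq_zero_or_pos d with h | h
        · subst h; omega
        · exact h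
      have he : 0 < e := by
        rcases Nat.eq_zero_or_pos e with h | h
        · subst h; omega
        · exact h
      have o1 : Odd (d * δ) := by rw [← h1]; exact Nat.odd_iff.2 ha.2
      have o2 : Odd (e * ε) := by rw [← h3]; exact Nat.odd_iff.2 (by omega)
      rw [Nat.odd_mul, Nat.odd_iff, Nat.odd_iff] at o1 o2
      simp only [Finset.mem_filter, mem_dirS]
      rw [h3, h1, Nat.mul_div_cancel_left _ hd, Nat.mul_div_cancel_left _ he]
      omega
    · rintro ⟨d, δ, e, ε⟩ hx
      simp only [Finset.mem_filter, mem_dirS] at hx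
      obtain ⟨⟨h1, h2, h3, h4, h⟩, rfl⟩ := hx
      have : 2 * m - d * δ = e * ε := by omega
      simp only [this]
      rw [Nat.mul_div_cancel_left _ (by omega), Nat.mul_div_cancel_left _ (by omega)]
    · rintro ⟨d, e⟩ hx; rfl
    · rintro ⟨d, δ, e, ε⟩ hx; rfl
  · rintro ⟨d, δ, e, ε⟩ hx
    simp only [mem_dirS] at hx
    obtain ⟨h1, h2, h3, h4, h⟩ := hx
    simp only [Finset.mem_filter, Finset.mem_range]
    have : 0 < e * ε := Nat.mul_pos (by omega) (by omega)
    exact ⟨by omega, Nat.odd_iff.1 ((Nat.odd_iff.2 h1).mul (Nat.odd_iff.2 h2))⟩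

/-- Pairs of Gaussian integers with odd norms summing to `2 * m`. -/
def dirT (m : ℕ) : Finset (Σ _ : ℕ, GaussianInt × GaussianInt) :=
  ((Finset.range (2 * m)).filter (fun a ↦ a % 2 = 1)).sigma (fun a ↦ gs a ×ˢ gs (2 * m - a))

lemma dirT_card (m : ℕ) (hm : m % 2 = 1) : 16 * m ≤ (dirT m).card := by
  unfold dirT
  rw [Finset.card_sigma]
  have h := dir_sum m hm
  rw [dir_sum_eq] at h
  have : (16 * m : ℤ) ≤ ∑ a ∈ (Finset.range (2 * m)).filter (fun a ↦ a % 2 = 1),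
      ((gs a ×ˢ gs (2 * m - a)).card : ℤ) := by
    refine le_trans (mul_le_mul_of_nonneg_left h (by norm_num)) ?_
    rw [Finset.mul_sum]
    refine Finset.sum_le_sum (fun a ha ↦ ?_)
    simp only [Finset.mem_filter, Finset.mem_range] at ha
    obtain ⟨a0, a1⟩ := gs_ge_Rchi a ha.2
    obtain ⟨b0, b1⟩ := gs_ge_Rchi (2 * m - a) (by omega)
    rw [Finset.card_product, Nat.cast_mul]
    have := mul_le_mul a1 b1 (by positivity) (by positivity)
    linarith
  exact_mod_cast this

lemma mem_sphF (n N lam : ℕ) (h : Nat.sqrt lam ≤ N) (x : Fin n → ℤ) :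
    x ∈ sphF n N lam ↔ ∑ i, x i ^ 2 = (lam : ℤ) := by
  unfold sphF
  rw [Finset.mem_filter, Fintype.mem_piFinset]
  refine ⟨fun h ↦ h.2, fun hx ↦ ⟨fun i ↦ ?_, hx⟩⟩
  have h1 : x i ^ 2 ≤ (lam : ℤ) := by
    rw [← hx]
    exact Finset.single_le_sum (f := fun i ↦ x i ^ 2) (fun i _ ↦ sq_nonneg _) (Finset.mem_univ i)
  have h2 : (lam : ℤ) < ((N : ℤ) + 1) ^ 2 := by
    have := Nat.lt_succ_sqrt' lam
    have h3 : (Nat.sqrt lam + 1) ^ 2 ≤ (N + 1) ^ 2 := Nat.pow_le_pow_left (by omega) 2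
    have h4 : lam < (N + 1) ^ 2 := lt_of_lt_of_le this h3
    exact_mod_cast h4
  have h3 := abs_lt_of_sq_lt_sq (lt_of_le_of_lt h1 h2) (by positivity)
  rw [abs_lt] at h3
  rw [Finset.mem_Icc]
  omega

lemma dirT_mem (m : ℕ) (t : Σ _ : ℕ, GaussianInt × GaussianInt) (ht : t ∈ dirT m) :
    (t.1 : ℤ) = t.2.1.re ^ 2 + t.2.1.im ^ 2 ∧
    t.2.1.re ^ 2 + t.2.1.im ^ 2 + t.2.2.re ^ 2 + t.2.2.im ^ 2 = 2 * m ∧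
    (t.2.1.re + t.2.1.im) % 2 = 1 ∧ (t.2.2.re + t.2.2.im) % 2 = 1 := by
  obtain ⟨a, z, w⟩ := t
  unfold dirT at ht
  simp only [Finset.mem_sigma, Finset.mem_filter, Finset.mem_range, Finset.mem_product,
    mem_gs, gi_norm] at ht
  obtain ⟨⟨h1, h2⟩, h3, h4⟩ := ht
  rw [Nat.cast_sub h1.le] at h4
  push_cast at h4
  have par : ∀ x y : ℤ, (x ^ 2 + y ^ 2) % 2 = 1 → (x + y) % 2 = 1 := by
    intro x y h
    have e : x ^ 2 + y ^ 2 = (x + y) + (x * (x - 1) + y * (y - 1)) := by ring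
    have h1 : Even (x * (x - 1)) := Int.even_mul_pred_self x
    have h2 : Even (y * (y - 1)) := Int.even_mul_pred_self y
    obtain ⟨a, ha⟩ := h1
    obtain ⟨b, hb⟩ := h2
    omega
  refine ⟨h3.symm, by linarith, par _ _ (by rw [h3]; omega), par _ _ (by rw [h4]; omega)⟩

lemma r4_odd (m N : ℕ) (hm : m % 2 = 1) (hN : Nat.sqrt m ≤ N) : 8 * m ≤ (sphF 4 N m).card := by
  have h16 := dirT_card m hm
  have hsplit := Finset.card_filter_add_card_filter_not (s := dirT m)
    (fun t ↦ (t.2.1.re - t.2.2.re) % 2 = 0)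
  have half : ∀ a b : ℤ, (a - b) % 2 = 0 → ∃ A B, a = A + B ∧ b = A - B ∧ (a + b) / 2 = A ∧ (a - b) / 2 = B := by
    intro a b h
    exact ⟨(a + b) / 2, (a - b) / 2, by omega, by omega, rfl, rfl⟩
  have hsig : ∀ t t' : (Σ _ : ℕ, GaussianInt × GaussianInt), t ∈ dirT m → t' ∈ dirT m →
      t.2.1.re = t'.2.1.re → t.2.1.im = t'.2.1.im → t.2.2.re = t'.2.2.re →
      t.2.2.im = t'.2.2.im → t = t' := by
    intro t t' ht ht' e1 e2 e3 e4
    have h1 := (dirT_mem m t ht).1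
    have h2 := (dirT_mem m t' ht').1
    obtain ⟨a, ⟨z1, z2⟩, ⟨w1, w2⟩⟩ := t
    obtain ⟨a', ⟨z1', z2'⟩, ⟨w1', w2'⟩⟩ := t'
    simp only at e1 e2 e3 e4 h1 h2
    subst e1 e2 e3 e4
    have : a = a' := by
      have : (a : ℤ) = a' := by rw [h1, h2]
      exact_mod_cast this
    subst this
    rfl
  have c1 : ((dirT m).filter (fun t ↦ (t.2.1.re - t.2.2.re) % 2 = 0)).card ≤ (sphF 4 N m).card := by
    refine Finset.card_le_card_of_injOn (fun t ↦ ![(t.2.1.re + t.2.2.re) / 2,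
      (t.2.1.re - t.2.2.re) / 2, (t.2.1.im + t.2.2.im) / 2, (t.2.1.im - t.2.2.im) / 2]) ?_ ?_
    · intro t ht
      simp only [Finset.mem_coe, Finset.mem_filter] at ht
      obtain ⟨ht, h0⟩ := ht
      obtain ⟨-, h1, h2, h3⟩ := dirT_mem m t ht
      obtain ⟨A, B, a1, a2, a3, a4⟩ := half _ _ h0
      obtain ⟨C, D, b1, b2, b3, b4⟩ := half t.2.1.im t.2.2.im (by omega)
      rw [Finset.mem_coe, mem_sphF 4 N m hN]
      simp only [Fin.sum_univ_four, a3, a4, b3, b4]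
      simp
      rw [a1, a2, b1, b2] at h1
      linarith
    · intro t ht t' ht' he
      simp only [Finset.mem_coe, Finset.mem_filter] at ht ht'
      obtain ⟨-, h1, h2, h3⟩ := dirT_mem m t ht.1
      obtain ⟨-, h1', h2', h3'⟩ := dirT_mem m t' ht'.1
      have e0 := congrFun he 0
      have e1 := congrFun he 1
      have e2 := congrFun he 2
      have e3 := congrFun he 3
      simp at e0 e1 e2 e3
      refine hsig t t' ht.1 ht'.1 ?_ ?_ ?_ ?_ <;> omega
  have c2 : ((dirT m).filter (fun t ↦ ¬ (t.2.1.re - t.2.2.re) % 2 = 0)).card ≤ (sphF 4 N m).card := by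
    refine Finset.card_le_card_of_injOn (fun t ↦ ![(t.2.1.re + t.2.2.im) / 2,
      (t.2.1.re - t.2.2.im) / 2, (t.2.1.im + t.2.2.re) / 2, (t.2.1.im - t.2.2.re) / 2]) ?_ ?_
    · intro t ht
      simp only [Finset.mem_coe, Finset.mem_filter] at ht
      obtain ⟨ht, h0⟩ := ht
      obtain ⟨-, h1, h2, h3⟩ := dirT_mem m t ht
      obtain ⟨A, B, a1, a2, a3, a4⟩ := half t.2.1.re t.2.2.im (by omega)
      obtain ⟨C, D, b1, b2, b3, b4⟩ := half t.2.1.im t.2.2.re (by omega)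
      rw [Finset.mem_coe, mem_sphF 4 N m hN]
      simp only [Fin.sum_univ_four, a3, a4, b3, b4]
      simp
      rw [a1, a2, b1, b2] at h1
      linarith
    · intro t ht t' ht' he
      simp only [Finset.mem_coe, Finset.mem_filter] at ht ht'
      obtain ⟨-, h1, h2, h3⟩ := dirT_mem m t ht.1
      obtain ⟨-, h1', h2', h3'⟩ := dirT_mem m t' ht'.1
      have e0 := congrFun he 0
      have e1 := congrFun he 1
      have e2 := congrFun he 2
      have e3 := congrFun he 3
      simp at e0 e1 e2 e3
      refine hsig t t' ht.1 ht'.1 ?_ ?_ ?_ ?_ <;> omega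
  omega

/-! ### Lower bound for the number of lattice points on spheres -/

/-- Number of lattice points on the sphere. -/
def rr (n lam : ℕ) : ℕ := (sphF n (Nat.sqrt lam) lam).card

lemma sphF_eq (n N lam : ℕ) (h : Nat.sqrt lam ≤ N) : sphF n N lam = sphF n (Nat.sqrt lam) lam := by
  ext x
  rw [mem_sphF n N lam h, mem_sphF n _ lam le_rfl]

lemma rr_succ (n lam : ℕ) (K : Finset ℕ) (hK : ∀ k ∈ K, k ^ 2 ≤ lam) :
    ∑ k ∈ K, rr n (lam - k ^ 2) ≤ rr (n + 1) lam := by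
  unfold rr
  rw [← Finset.card_sigma K (fun k ↦ sphF n (Nat.sqrt (lam - k ^ 2)) (lam - k ^ 2))]
  refine Finset.card_le_card_of_injOn (fun t ↦ (Fin.cons (t.1 : ℤ) t.2 : Fin (n + 1) → ℤ)) ?_ ?_
  · rintro ⟨k, x⟩ h
    simp only [Finset.mem_coe, Finset.mem_sigma] at h
    obtain ⟨h1, h2⟩ := h
    rw [mem_sphF _ _ _ le_rfl] at h2
    rw [Finset.mem_coe, mem_sphF _ _ _ le_rfl, Fin.sum_univ_succ]
    simp only [Fin.cons_zero, Fin.cons_succ]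
    rw [h2, Nat.cast_sub (hK k h1)]
    push_cast; ring
  · rintro ⟨k, x⟩ _ ⟨l, y⟩ _ h
    simp only at h
    rw [Fin.cons_inj] at h
    obtain ⟨h1, rfl⟩ := h
    have : k = l := by exact_mod_cast h1
    subst this
    rfl

lemma rr_five_pos (lam : ℕ) : 1 ≤ rr 5 lam := by
  obtain ⟨a, b, c, d, h⟩ := Nat.sum_four_squares lam
  refine Finset.card_pos.2 ⟨![(a : ℤ), b, c, d, 0], ?_⟩
  rw [mem_sphF _ _ _ le_rfl, Fin.sum_univ_five, ← h]
  simp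

lemma rr_five (lam : ℕ) : (1 / 64 : ℝ) * (Nat.sqrt lam : ℝ) ^ 3 ≤ rr 5 lam := by
  set s := Nat.sqrt lam with hs
  by_cases h4 : s < 4
  · have h1 : (1 : ℝ) ≤ rr 5 lam := by exact_mod_cast rr_five_pos lam
    have h2 : (s : ℝ) ≤ 4 := by exact_mod_cast h4.le
    have h3 : (s : ℝ) ^ 3 ≤ 4 ^ 3 := pow_le_pow_left₀ (by positivity) h2 3
    linarith
  · push Not at h4
    set c := (lam + 1) % 2 with hc
    have hc1 : c ≤ 1 := by omega
    have hss : s ^ 2 ≤ lam := Nat.sqrt_le' lam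
    let K := (Finset.range (s / 4)).image (fun k ↦ 2 * k + c)
    have hKb : ∀ x ∈ K, 4 * x ^ 2 ≤ lam ∧ (lam - x ^ 2) % 2 = 1 := by
      intro x hx
      simp only [K, Finset.mem_image, Finset.mem_range] at hx
      obtain ⟨k, hk, rfl⟩ := hx
      have h2 : 2 * (2 * k + c) ≤ s := by omega
      have h3 : 4 * (2 * k + c) ^ 2 ≤ lam := by nlinarith
      refine ⟨h3, ?_⟩
      have e : (2 * k + c) ^ 2 = 2 * (2 * k * k + 2 * k * c) + c ^ 2 := by ring
      have e2 : c ^ 2 = c := by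
        rcases (show c = 0 ∨ c = 1 by omega) with h | h <;> rw [h] <;> rfl
      rw [e2] at e
      omega
    have hcard : K.card = s / 4 := by
      rw [Finset.card_image_of_injective _ (fun a b (h : 2 * a + c = 2 * b + c) ↦ by omega), Finset.card_range]
    have h5 := rr_succ 4 lam K (fun k hk ↦ by have := (hKb k hk).1; omega)
    have h6 : (s / 4) * (6 * s ^ 2) ≤ ∑ k ∈ K, rr 4 (lam - k ^ 2) := by
      rw [← hcard, ← smul_eq_mul]
      refine Finset.card_nsmul_le_sum _ _ _ (fun x hx ↦ ?_)
      obtain ⟨h1, h2⟩ := hKb x hx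
      have := r4_odd (lam - x ^ 2) _ h2 le_rfl
      unfold rr
      omega
    have h7 : s ≤ 16 * (s / 4) := by omega
    have h8 : s * (6 * s ^ 2) ≤ 16 * rr 5 lam := by
      calc s * (6 * s ^ 2) ≤ 16 * (s / 4) * (6 * s ^ 2) := Nat.mul_le_mul_right _ h7
        _ = 16 * ((s / 4) * (6 * s ^ 2)) := by ring
        _ ≤ 16 * rr 5 lam := Nat.mul_le_mul_left _ (h6.trans h5)
    have h9 : (s : ℝ) * (6 * (s : ℝ) ^ 2) ≤ 16 * rr 5 lam := by exact_mod_cast h8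
    have : (0 : ℝ) ≤ (s : ℝ) ^ 3 := by positivity
    nlinarith

lemma rr_lower (n : ℕ) (hn : 5 ≤ n) :
    ∃ c : ℝ, 0 < c ∧ ∀ lam : ℕ, 1 ≤ lam → c * (Nat.sqrt lam : ℝ) ^ (n - 2) ≤ rr n lam := by
  induction n, hn using Nat.le_induction with
  | base => exact ⟨1 / 64, by norm_num, fun lam _ ↦ rr_five lam⟩
  | succ n hn ih =>
    obtain ⟨c, hc, h⟩ := ih
    refine ⟨c * (1 / 2) ^ (n - 1), by positivity, fun lam hlam ↦ ?_⟩
    set s := Nat.sqrt lam with hs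
    have hs1 : 1 ≤ s := Nat.sqrt_pos.2 hlam
    have hss : s ^ 2 ≤ lam := Nat.sqrt_le' lam
    have hk : ∀ k ∈ Finset.range (s / 2 + 1), k ^ 2 ≤ lam ∧ 1 ≤ lam - k ^ 2 ∧
        s - s / 2 ≤ Nat.sqrt (lam - k ^ 2) := by
      intro k hk
      rw [Finset.mem_range] at hk
      obtain ⟨t, ht⟩ : ∃ t, s = k + t := ⟨s - k, by omega⟩
      have hkt : k ≤ t := by omega
      have h1 : k ^ 2 + t ^ 2 ≤ lam := by
        rw [ht] at hss; nlinarith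
      have ht1 : 1 ≤ t ^ 2 := Nat.one_le_pow _ _ (by omega)
      refine ⟨by omega, by omega, ?_⟩
      rw [Nat.le_sqrt']
      refine le_trans (Nat.pow_le_pow_left (show s - s / 2 ≤ t by omega) 2) (by omega)
    have h5 := rr_succ n lam (Finset.range (s / 2 + 1)) (fun k h ↦ (hk k h).1)
    have hreal : (s : ℝ) / 2 ≤ ((s - s / 2 : ℕ) : ℝ) := by
      have : s ≤ 2 * (s - s / 2) := by omega
      have : (s : ℝ) ≤ 2 * ((s - s / 2 : ℕ) : ℝ) := by exact_mod_cast this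
      linarith
    have h6 : ((s / 2 + 1 : ℕ) : ℝ) * (c * ((s : ℝ) / 2) ^ (n - 2)) ≤
        ∑ k ∈ Finset.range (s / 2 + 1), (rr n (lam - k ^ 2) : ℝ) := by
      have := Finset.card_nsmul_le_sum (Finset.range (s / 2 + 1))
        (fun k ↦ (rr n (lam - k ^ 2) : ℝ)) (c * ((s : ℝ) / 2) ^ (n - 2)) (fun k hkm ↦ by
          obtain ⟨h1, h2, h3⟩ := hk k hkm
          refine le_trans ?_ (h _ h2)
          refine mul_le_mul_of_nonneg_left ?_ hc.le
          refine pow_le_pow_left₀ (by positivity) (hreal.trans ?_) _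
          exact_mod_cast h3)
      rwa [Finset.card_range, nsmul_eq_mul] at this
    have h7 : (s : ℝ) / 2 ≤ ((s / 2 + 1 : ℕ) : ℝ) := by
      have : s ≤ 2 * (s / 2 + 1) := by omega
      have : (s : ℝ) ≤ 2 * ((s / 2 + 1 : ℕ) : ℝ) := by exact_mod_cast this
      linarith
    calc c * (1 / 2) ^ (n - 1) * (s : ℝ) ^ (n + 1 - 2)
        = (s : ℝ) / 2 * (c * ((s : ℝ) / 2) ^ (n - 2)) := by
          obtain ⟨l, rfl⟩ := Nat.exists_eq_add_of_le hn
          rw [show 5 + l - 1 = l + 4 by omega, show 5 + l + 1 - 2 = l + 4 by omega,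
            show 5 + l - 2 = l + 3 by omega]
          ring
      _ ≤ ((s / 2 + 1 : ℕ) : ℝ) * (c * ((s : ℝ) / 2) ^ (n - 2)) :=
          mul_le_mul_of_nonneg_right h7 (by positivity)
      _ ≤ _ := h6
      _ ≤ _ := by exact_mod_cast h5


/-! ### Conclusion -/

lemma sphereCount_eq (n lam : ℕ) : sphereCount n lam = rr n lam := by
  unfold sphereCount rr
  rw [← Set.ncard_coe_finset]
  congr 1
  ext x
  rw [Finset.mem_coe, mem_sphF _ _ _ le_rfl]
  rfl

lemma mulAvg_le (n : ℕ) (hn : 5 ≤ n) : ∃ C : ℝ≥0, ∀ (f : Fin n → ℤ → ℂ) (y : ℤ) (lam : ℕ), 1 ≤ lam →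
    ‖mulAvg n lam f y‖ ≤ C * ∏ i, Real.sqrt ((Nat.sqrt lam : ℝ)⁻¹ *
      ∑ x ∈ Finset.Icc (-(Nat.sqrt lam : ℤ)) (Nat.sqrt lam : ℤ), ‖f i (y - x)‖ ^ 2) := by
  obtain ⟨C, hC, hmul⟩ := multilinear n hn
  obtain ⟨c, hc, hlow⟩ := rr_lower n hn
  refine ⟨⟨C / c, by positivity⟩, fun f y lam hlam ↦ ?_⟩
  have hr := hlow lam hlam
  set N := Nat.sqrt lam with hN
  have hN1 : 1 ≤ N := Nat.sqrt_pos.2 hlam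
  have hNpos : (0 : ℝ) < N := by exact_mod_cast hN1
  have hm := hmul N lam (fun i x ↦ ‖f i (y - x)‖) hN1 (fun i x ↦ norm_nonneg _)
  have hset : {x : Fin n → ℤ | ∑ i, (x i) ^ 2 = (lam : ℤ)} = (sphF n N lam : Set (Fin n → ℤ)) := by
    ext x
    rw [Finset.mem_coe, mem_sphF _ _ _ hN.symm.le]
    rfl
  unfold mulAvg
  rw [hset, finsum_mem_coe_finset, norm_mul, norm_inv, Complex.norm_natCast, sphereCount_eq]
  have h1 : ‖∑ x ∈ sphF n N lam, ∏ i, f i (y - x i)‖ ≤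
      ∑ x ∈ sphF n N lam, ∏ i, ‖f i (y - x i)‖ := by
    refine (norm_sum_le _ _).trans (le_of_eq ?_)
    refine Finset.sum_congr rfl (fun x _ ↦ ?_)
    rw [norm_prod]
  have h2 := h1.trans hm
  set P := ∏ i, Real.sqrt (∑ x ∈ Finset.Icc (-(N:ℤ)) N, ‖f i (y - x)‖ ^ 2) with hP
  have hP0 : 0 ≤ P := Finset.prod_nonneg (fun i _ ↦ Real.sqrt_nonneg _)
  have e1 : ∏ i, Real.sqrt ((N : ℝ)⁻¹ *
      ∑ x ∈ Finset.Icc (-(N : ℤ)) (N : ℤ), ‖f i (y - x)‖ ^ 2) = (Real.sqrt N ^ n)⁻¹ * P := by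
    rw [hP]
    have : (Real.sqrt N ^ n)⁻¹ = ∏ _i : Fin n, (Real.sqrt N)⁻¹ := by simp
    rw [this, ← Finset.prod_mul_distrib]
    refine Finset.prod_congr rfl (fun i _ ↦ ?_)
    rw [Real.sqrt_mul (by positivity), Real.sqrt_inv]
  rw [e1]
  have hrpos : 0 < c * (N : ℝ) ^ (n - 2) := by positivity
  have h3 : ((rr n lam : ℕ) : ℝ)⁻¹ ≤ (c * (N : ℝ) ^ (n - 2))⁻¹ := inv_anti₀ hrpos hr
  have hsq : Real.sqrt N ^ n * Real.sqrt N ^ n = (N : ℝ) ^ (n - 2) * N ^ 2 := by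
    rw [← mul_pow, Real.mul_self_sqrt hNpos.le, ← pow_add, Nat.sub_add_cancel (by omega)]
  have hsp : 0 < Real.sqrt N ^ n := by positivity
  calc _ ≤ (c * (N : ℝ) ^ (n - 2))⁻¹ * (C * Real.sqrt N ^ n / N ^ 2 * P) :=
        mul_le_mul h3 h2 (norm_nonneg _) (by positivity)
    _ = (C / c) * ((Real.sqrt N ^ n)⁻¹ * P) := by
        have : (C * Real.sqrt N ^ n / N ^ 2) * (c * (N : ℝ) ^ (n - 2))⁻¹ =
            (C / c) * (Real.sqrt N ^ n)⁻¹ := by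
          field_simp
          rw [sq, hsq]
          ring
        linear_combination P * this
    _ = _ := rfl

lemma mulAvg_enn (n : ℕ) (hn : 5 ≤ n) : ∃ C : ℝ≥0, ∀ (f : Fin n → ℤ → ℂ) (y : ℤ),
    maxFn n f y ≤ (C : ℝ≥0∞) * ∏ i, (⨆ (N : ℕ) (_ : 1 ≤ N), (N : ℝ≥0∞)⁻¹ *
      ∑ x ∈ Finset.Icc (-(N : ℤ)) (N : ℤ), (‖f i (y - x)‖₊ : ℝ≥0∞) ^ 2) ^ ((1 : ℝ) / 2) := by
  obtain ⟨C, hC⟩ := mulAvg_le n hn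
  refine ⟨C, fun f y ↦ ?_⟩
  unfold maxFn
  refine iSup₂_le (fun lam hlam ↦ ?_)
  have h := hC f y lam hlam
  set N := Nat.sqrt lam with hN
  have hN1 : 1 ≤ N := Nat.sqrt_pos.2 hlam
  have hNpos : (0 : ℝ) < N := by exact_mod_cast hN1
  have h1 : (‖mulAvg n lam f y‖₊ : ℝ≥0∞) = ENNReal.ofReal ‖mulAvg n lam f y‖ := by
    rw [ofReal_norm]; rfl
  rw [h1]
  refine (ENNReal.ofReal_le_ofReal h).trans ?_
  rw [ENNReal.ofReal_mul (by positivity), ENNReal.ofReal_coe_nnreal,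
    ENNReal.ofReal_prod_of_nonneg (fun i _ ↦ Real.sqrt_nonneg _)]
  refine mul_le_mul_right (Finset.prod_le_prod' (fun i _ ↦ ?_)) _
  rw [Real.sqrt_eq_rpow, ← ENNReal.ofReal_rpow_of_nonneg (by positivity) (by norm_num)]
  refine ENNReal.rpow_le_rpow ?_ (by norm_num)
  refine le_trans (le_of_eq ?_) (le_iSup₂ (f := fun (N : ℕ) (_ : 1 ≤ N) ↦ (N : ℝ≥0∞)⁻¹ *
      ∑ x ∈ Finset.Icc (-(N : ℤ)) (N : ℤ), (‖f i (y - x)‖₊ : ℝ≥0∞) ^ 2) N hN1)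
  rw [ENNReal.ofReal_mul (by positivity), ENNReal.ofReal_inv_of_pos hNpos, ENNReal.ofReal_natCast,
    ENNReal.ofReal_sum_of_nonneg (fun _ _ ↦ by positivity)]
  congr 1
  refine Finset.sum_congr rfl (fun x _ ↦ ?_)
  rw [ENNReal.ofReal_pow (norm_nonneg _), ofReal_norm]
  rfl

lemma holder_tsum (n : ℕ) (hn : 1 ≤ n) (h : Fin n → ℤ → ℝ≥0∞) :
    ∑' y : ℤ, ∏ i, h i y ^ ((1 : ℝ) / n) ≤ ∏ i, (∑' y : ℤ, h i y) ^ ((1 : ℝ) / n) := by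
  have := ENNReal.lintegral_prod_norm_pow_le (μ := (Measure.count : Measure ℤ)) Finset.univ
    (f := h) (fun i _ ↦ (measurable_of_countable _).aemeasurable) (p := fun _ ↦ (1 : ℝ) / n)
    (by
      have : (n : ℝ) ≠ 0 := by positivity
      simp [this]) (fun i _ ↦ by positivity)
  simpa only [lintegral_count] using this

/-- for `n ≥ 5`, `1 ≤ q < ∞` and `p = n q`, there is `C = C(n,q)` with
`‖A_*[f₁,…,f_n]‖_{ℓ^q}^q ≤ C ∏_i (∑_y (sup_{N ≥ 1} N⁻¹ ∑_{|x| ≤ N} |f_i(y-x)|²)^{qn/2})^{1/n}`. -/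
theorem statement16 (n : ℕ) (hn : 5 ≤ n) (q : ℝ) (hq : 1 ≤ q) :
    ∃ C : ℝ≥0, ∀ f : Fin n → ℤ → ℂ, (∀ i, lpNorm ((n : ℝ) * q) (f i) ≠ ∞) →
      lqNormE q (maxFn n f) ^ q ≤ (C : ℝ≥0∞) *
        ∏ i, (∑' y : ℤ, (⨆ (N : ℕ) (_ : 1 ≤ N), (N : ℝ≥0∞)⁻¹ *
            ∑ x ∈ Finset.Icc (-(N : ℤ)) (N : ℤ), (‖f i (y - x)‖₊ : ℝ≥0∞) ^ 2)
          ^ (q * (n : ℝ) / 2)) ^ ((1 : ℝ) / n) := by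
  obtain ⟨C, hC⟩ := mulAvg_enn n hn
  have hq0 : 0 < q := by linarith
  have hn0 : (n : ℝ) ≠ 0 := by positivity
  refine ⟨C ^ q, fun f _ ↦ ?_⟩
  unfold lqNormE
  rw [← ENNReal.rpow_mul, one_div, inv_mul_cancel₀ hq0.ne', ENNReal.rpow_one]
  refine le_trans (ENNReal.tsum_le_tsum (fun y ↦ ENNReal.rpow_le_rpow (hC f y) hq0.le)) ?_
  simp_rw [ENNReal.mul_rpow_of_nonneg _ _ hq0.le, ENNReal.tsum_mul_left]
  rw [ENNReal.coe_rpow_of_nonneg _ hq0.le]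
  refine mul_le_mul_right ?_ _
  refine le_trans (le_of_eq ?_) (holder_tsum n (by omega) _)
  refine tsum_congr (fun y ↦ ?_)
  rw [← ENNReal.prod_rpow_of_nonneg hq0.le]
  refine Finset.prod_congr rfl (fun i _ ↦ ?_)
  rw [← ENNReal.rpow_mul, ← ENNReal.rpow_mul]
  congr 1
  field_simp
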